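/- Let F be a field of characteristic 2, let n ≥ 1, let π be an n-fold quadratic Pfister form over F, and let K be a purely inseparable extension of F of exponent 1 (K² ⊆ F). Let L = K(π) be the function field over K of the projective quadric defined by π = 0. Then W_q(L/F) = W_q(K/F) + W(F) ⊗ π. -/

import Mathlib

/-!  A concrete coefficient-matrix model of (possibly singular) finite-dimensional
quadratic forms over a field, suitable for characteristic 2. -/

/-- Coefficient representation of a (finite-dimensional) quadratic form over a field `F`:
the form of dimension `dim` given by `q(x) = ∑ i j, c i j * x i * x j`. -/
structure QF (F : Type*) [Field F] : Type _ where
  dim : ℕ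
  c : Matrix (Fin dim) (Fin dim) F

namespace QF

variable {F E : Type*} [Field F] [Field E]

/-- Evaluation of the quadratic form at a vector. -/
def eval (q : QF F) (x : Fin q.dim → F) : F :=
  ∑ i, ∑ j, q.c i j * x i * x j

/-- Scalar extension (base change) of a quadratic form along a ring homomorphism. -/
def map (f : F →+* E) (q : QF F) : QF E :=
  ⟨q.dim, fun i j => f (q.c i j)⟩

/-- Orthogonal sum. -/
def orthSum (q q' : QF F) : QF F :=
  ⟨q.dim + q'.dim,
    Matrix.reindex finSumFinEquiv finSumFinEquiv (Matrix.fromBlocks q.c 0 0 q'.c)⟩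

/-- Scaling `a • q`. -/
def smul (a : F) (q : QF F) : QF F := ⟨q.dim, a • q.c⟩

/-- The nonsingular binary quadratic form `[a,b] : (x,y) ↦ ax² + xy + by²`. -/
def bin (a b : F) : QF F := ⟨2, !![a, 1; 0, b]⟩

/-- The diagonal (totally singular) quadratic form `⟨a₁, …, aₙ⟩`. -/
def diag {n : ℕ} (v : Fin n → F) : QF F := ⟨n, Matrix.diagonal v⟩

/-- The zero-dimensional quadratic form. -/
def nil : QF F := { dim := 0, c := 0 }

/-- The one-dimensional form `⟨1⟩`. -/
def unit : QF F := diag (fun _ : Fin 1 => (1 : F))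

/-- Orthogonal sum of a list of forms. -/
def sumList (l : List (QF F)) : QF F := l.foldr orthSum nil

/-- `pfTensor [a₁,…,aₙ] q` is the tensor product `⟨⟨a₁,…,aₙ⟩⟩_b ⊗ q` of the bilinear
Pfister form `⟨⟨a₁,…,aₙ⟩⟩_b = ⟨1,a₁⟩_b ⊗ ⋯ ⊗ ⟨1,aₙ⟩_b` with the quadratic form `q`,
via `⟨1,a⟩_b ⊗ q ≅ q ⊥ a·q`. -/
def pfTensor (l : List F) (q : QF F) : QF F :=
  l.foldr (fun a r => orthSum r (smul a r)) q

/-- The hyperbolic plane `ℍ ≅ [0,0]`. -/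
def hypPlane : QF F := bin 0 0

/-- The orthogonal sum of `k` hyperbolic planes. -/
def hyp (k : ℕ) : QF F := sumList (List.replicate k hypPlane)

/-- The `l`-dimensional zero form `⟨0,…,0⟩`. -/
def zeros (l : ℕ) : QF F := diag (fun _ : Fin l => (0 : F))

/-- Isometry of quadratic forms. -/
def Isometric (q q' : QF F) : Prop :=
  ∃ e : (Fin q.dim → F) ≃ₗ[F] (Fin q'.dim → F), ∀ x, q'.eval (e x) = q.eval x

/-- Anisotropy: the form has no nontrivial zero. -/
def Anisotropic (q : QF F) : Prop := ∀ x, q.eval x = 0 → x = 0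

/-- A quadratic form is nonsingular if the radical of its polar form
`B_q(x,y) = q(x+y) - q(x) - q(y)` (with matrix `c + cᵀ`) is trivial. -/
def Nonsingular (q : QF F) : Prop := ∀ x, (q.c + q.c.transpose).mulVec x = 0 → x = 0

/-- A quadratic form is totally singular if its polar form vanishes identically. -/
def TotallySingular (q : QF F) : Prop := q.c + q.c.transpose = 0

/-- A quadratic form is hyperbolic if it is isometric to an orthogonal sum of
hyperbolic planes. -/
def Hyperbolic (q : QF F) : Prop := ∃ k, Isometric q (hyp k)

/-- Witt equivalence: `q ~ q'` iff the anisotropic parts agree, equivalently the two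
forms become isometric after adding suitable numbers of hyperbolic planes and zero
forms. -/
def WittEquiv (q q' : QF F) : Prop :=
  ∃ k k' l l', Isometric (orthSum q (orthSum (hyp k) (zeros l)))
    (orthSum q' (orthSum (hyp k') (zeros l')))

/-- `AnisoPartOf φ q` : `φ` is (isometric to) the anisotropic part of `q`, i.e. `φ` is
anisotropic and `q ≅ k × ℍ ⊥ φ ⊥ ⟨0,…,0⟩`. -/
def AnisoPartOf (φ q : QF F) : Prop :=
  Anisotropic φ ∧ ∃ k l, Isometric q (orthSum (hyp k) (orthSum φ (zeros l)))

/-- `Dominates q' q` means `q ≺ q'`, i.e. `q'` dominates `q`: there is an injective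
linear map `t` of the underlying spaces with `q' ∘ t = q`. -/
def Dominates (q' q : QF F) : Prop :=
  ∃ t : (Fin q.dim → F) →ₗ[F] (Fin q'.dim → F), Function.Injective t ∧
    ∀ x, q'.eval (t x) = q.eval x

/-- The affine quadric polynomial `∑ cᵢⱼ XᵢXⱼ` of a quadratic form. -/
noncomputable def toPoly (q : QF F) : MvPolynomial (Fin q.dim) F :=
  ∑ i, ∑ j, MvPolynomial.C (q.c i j) * (MvPolynomial.X i * MvPolynomial.X j)

/-- The affine coordinate ring of the (reduced) quadric `q = 0`. -/
abbrev CoordRing (q : QF F) : Type _ :=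
  MvPolynomial (Fin q.dim) F ⧸ (Ideal.span {q.toPoly}).radical

/-- The function field of the quadric `q = 0` (assuming the quadric is integral). -/
abbrev FunctionField (q : QF F) [IsDomain (CoordRing q)] : Type _ :=
  FractionRing (CoordRing q)

/-- The canonical ring homomorphism from a base field `F` into the function field of a
quadric defined over an extension field `K` of `F`. -/
noncomputable def toFunctionField {K : Type*} [Field K] [Algebra F K] (q : QF K)
    [IsDomain (CoordRing q)] : F →+* FunctionField q :=
  (algebraMap (CoordRing q) (FunctionField q)).comp
    ((algebraMap K (CoordRing q)).comp (algebraMap F K))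

end QF

namespace WK
open QuadraticMap Module

section basics
variable {R S : Type*} [CommRing R] [CommRing S] {n : ℕ}

/-- The quadratic form attached to a coefficient matrix over a commutative ring. -/
noncomputable def Qc (c : Matrix (Fin n) (Fin n) R) : QuadraticForm R (Fin n → R) :=
  c.toQuadraticForm'

theorem Qc_apply (c : Matrix (Fin n) (Fin n) R) (x : Fin n → R) :
    Qc c x = ∑ i, ∑ j, c i j * x i * x j := by
  rw [Qc, Matrix.toQuadraticForm', LinearMap.BilinMap.toQuadraticMap_apply,
    Matrix.toLinearMap₂'_apply]
  refine Finset.sum_congr rfl fun i _ => Finset.sum_congr rfl fun j _ => ?_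
  simp; ring

theorem Qc_map (f : R →+* S) (c : Matrix (Fin n) (Fin n) R) (x : Fin n → R) :
    Qc (c.map f) (fun i => f (x i)) = f (Qc c x) := by
  simp [Qc_apply, map_sum, map_mul]

theorem polar_map (f : R →+* S) (c : Matrix (Fin n) (Fin n) R) (x y : Fin n → R) :
    polar (Qc (c.map f)) (fun i => f (x i)) (fun i => f (y i)) = f (polar (Qc c) x y) := by
  simp only [polar, map_sub, ← Qc_map]
  congr 3
  ext i; simp

theorem polar_Qc (c : Matrix (Fin n) (Fin n) R) (x y : Fin n → R) :
    polar (Qc c) x y = y ⬝ᵥ (c + c.transpose).mulVec x := by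
  simp only [polar, Qc_apply, dotProduct, Matrix.mulVec, Matrix.add_apply, Matrix.transpose_apply,
    Pi.add_apply, Finset.mul_sum, add_mul, mul_add, Finset.sum_add_distrib]
  have h1 : ∑ i, ∑ j, c i j * x i * y j = ∑ i, ∑ j, y i * (c j i * x j) := by
    rw [Finset.sum_comm]
    refine Finset.sum_congr rfl fun i _ => Finset.sum_congr rfl fun j _ => ?_
    ring
  have h2 : ∑ i, ∑ j, c i j * y i * x j = ∑ i, ∑ j, y i * (c i j * x j) := by
    refine Finset.sum_congr rfl fun i _ => Finset.sum_congr rfl fun j _ => ?_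
    ring
  rw [h1, h2]; ring

theorem Qc_add (c c' : Matrix (Fin n) (Fin n) R) (x : Fin n → R) :
    Qc (c + c') x = Qc c x + Qc c' x := by
  simp [Qc_apply, add_mul, Finset.sum_add_distrib]

theorem Qc_diagonal (v : Fin n → R) (x : Fin n → R) :
    Qc (Matrix.diagonal v) x = ∑ i, v i * x i ^ 2 := by
  rw [Qc_apply]
  refine Finset.sum_congr rfl fun i _ => ?_
  rw [Finset.sum_eq_single i]
  · simp; ring
  · intro j _ hj; simp [Matrix.diagonal_apply_ne' _ hj]
  · simp

theorem Qc_transform {m : ℕ} (c : Matrix (Fin n) (Fin n) R) (P : Matrix (Fin n) (Fin m) R)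
    (y : Fin m → R) : Qc (P.transpose * c * P) y = Qc c (P.mulVec y) := by
  have key : ∀ (k : ℕ) (c : Matrix (Fin k) (Fin k) R) (x : Fin k → R),
      Qc c x = x ⬝ᵥ c.mulVec x := by
    intro k c x
    rw [Qc_apply]
    simp only [dotProduct, Matrix.mulVec, Finset.mul_sum]
    refine Finset.sum_congr rfl fun i _ => Finset.sum_congr rfl fun j _ => ?_
    ring
  rw [key, key, ← Matrix.mulVec_mulVec, ← Matrix.mulVec_mulVec, Matrix.mulVec_transpose]
  rw [dotProduct_comm, ← Matrix.dotProduct_mulVec, dotProduct_comm]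

variable {V V' : Type*} [AddCommGroup V] [Module R V] [AddCommGroup V'] [Module R V']

theorem qsum_congr {ι : Type*} (s : Finset ι) (Q : QuadraticForm R V) (Q' : QuadraticForm R V')
    (v : ι → V) (v' : ι → V') (h : ∀ i, Q (v i) = Q' (v' i))
    (hp : ∀ i j, polar Q (v i) (v j) = polar Q' (v' i) (v' j)) (x : ι → R) :
    Q (∑ i ∈ s, x i • v i) = Q' (∑ i ∈ s, x i • v' i) := by
  classical
  induction s using Finset.induction_on with
  | empty => simp
  | insert a s ha ih =>
    rw [Finset.sum_insert ha, Finset.sum_insert ha, QuadraticMap.map_add Q, QuadraticMap.map_add Q', ih]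
    congr 1
    · simp [QuadraticMap.map_smul, h]
    · rw [← polarBilin_apply_apply, ← polarBilin_apply_apply, map_sum, map_sum]
      simp [hp]

theorem qc_ext (Q Q' : QuadraticForm R (Fin n → R))
    (h : ∀ i, Q (Pi.single i 1) = Q' (Pi.single i 1))
    (hp : ∀ i j, polar Q (Pi.single i 1) (Pi.single j 1)
      = polar Q' (Pi.single i 1) (Pi.single j 1)) (x : Fin n → R) : Q x = Q' x := by
  have := qsum_congr Finset.univ Q Q' (fun i => Pi.single i (1 : R))
    (fun i => Pi.single i (1 : R)) h hp x
  have hx : ∑ i, x i • (Pi.single i (1 : R) : Fin n → R) = x := by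
    ext j; simp [Finset.sum_apply, Pi.single_apply]
  rwa [hx] at this

theorem exists_Qc (Q : QuadraticForm R (Fin n → R)) : ∃ c : Matrix (Fin n) (Fin n) R,
    ∀ x, Qc c x = Q x := by
  refine ⟨LinearMap.toMatrix₂' R (Q.toBilin (Pi.basisFun R (Fin n))), fun x => ?_⟩
  rw [Qc, Matrix.toQuadraticForm', Matrix.toLinearMap₂'_toMatrix',
    QuadraticMap.toQuadraticMap_toBilin]

end basics

section lagr
variable {E : Type*} [Field E] {V V' W W' : Type*} [AddCommGroup V] [Module E V]
  [AddCommGroup V'] [Module E V'] [AddCommGroup W] [Module E W] [AddCommGroup W'] [Module E W']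

/-- Totally isotropic subspace of at least half the dimension. -/
def Lagr (Q : QuadraticForm E V) : Prop :=
  ∃ I : Submodule E V, (∀ x ∈ I, Q x = 0) ∧ finrank E V ≤ 2 * finrank E I

/-- Nondegenerate polar form. -/
def ND (Q : QuadraticForm E V) : Prop := ∀ x, (∀ y, polar Q x y = 0) → x = 0

theorem polar_equiv {Q : QuadraticForm E V} {Q' : QuadraticForm E V'} (e : V →ₗ[E] V')
    (h : ∀ x, Q' (e x) = Q x) (x y : V) : polar Q' (e x) (e y) = polar Q x y := by
  simp [polar, ← map_add, h]

theorem Lagr.equiv {Q : QuadraticForm E V} {Q' : QuadraticForm E V'} (h : Lagr Q)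
    (he : Q.Equivalent Q') : Lagr Q' := by
  obtain ⟨I, hI, hd⟩ := h
  obtain ⟨e⟩ := he
  refine ⟨I.map e.toLinearEquiv.toLinearMap, ?_, ?_⟩
  · rintro _ ⟨x, hx, rfl⟩
    exact (e.map_app x).trans (hI x hx)
  · rw [LinearEquiv.finrank_map_eq e.toLinearEquiv, ← e.toLinearEquiv.finrank_eq]
    exact hd

theorem ND.equiv {Q : QuadraticForm E V} {Q' : QuadraticForm E V'} (h : ND Q)
    (he : Q.Equivalent Q') : ND Q' := by
  obtain ⟨e⟩ := he
  intro x hx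
  have : e.toLinearEquiv.symm x = 0 := by
    refine h _ fun y => ?_
    rw [← polar_equiv e.toLinearEquiv.toLinearMap (Q' := Q') (fun x => e.map_app x)]
    simpa using hx _
  simpa using this

theorem ND.prod {Q : QuadraticForm E V} {Q' : QuadraticForm E V'} (h : ND Q) (h' : ND Q') :
    ND (Q.prod Q') := by
  rintro ⟨x, x'⟩ hx
  have h1 : x = 0 := h x fun y => by simpa using hx (y, 0)
  have h2 : x' = 0 := h' x' fun y => by simpa using hx (0, y)
  simp [h1, h2]

theorem ND.smul {Q : QuadraticForm E V} (h : ND Q) {a : E} (ha : a ≠ 0) : ND (a • Q) := by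
  intro x hx
  refine h x fun y => ?_
  have := hx y
  rw [FunLike.coe_smul, polar_smul] at this
  simpa [ha] using this

theorem ND.injective {Q : QuadraticForm E V} {Q' : QuadraticForm E V'} (h : ND Q)
    (e : V →ₗ[E] V') (he : ∀ x, Q' (e x) = Q x) : Function.Injective e := by
  rw [injective_iff_map_eq_zero]
  intro x hx
  refine h x fun y => ?_
  rw [← polar_equiv e he, hx]; simp

theorem Lagr.prod [FiniteDimensional E V] [FiniteDimensional E V'] {Q : QuadraticForm E V}
    {Q' : QuadraticForm E V'} (h : Lagr Q) (h' : Lagr Q') : Lagr (Q.prod Q') := by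
  obtain ⟨I, hI, hd⟩ := h
  obtain ⟨J, hJ, hd'⟩ := h'
  refine ⟨LinearMap.range (LinearMap.prodMap I.subtype J.subtype), ?_, ?_⟩
  · rintro _ ⟨⟨x, y⟩, rfl⟩
    simp [hI x x.2, hJ y y.2]
  · rw [LinearMap.finrank_range_of_inj, finrank_prod, finrank_prod]
    · omega
    · rintro ⟨x, y⟩ ⟨x', y'⟩ h
      simpa using h

/-- A totally isotropic graph gives a Lagrangian. -/
theorem Lagr.graph [FiniteDimensional E V] [FiniteDimensional E V'] [CharP E 2]
    {Q : QuadraticForm E V} {Q' : QuadraticForm E V'} (e : V →ₗ[E] V')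
    (he : ∀ x, Q' (e x) = Q x) (hd : finrank E V' ≤ finrank E V) : Lagr (Q.prod Q') := by
  refine ⟨LinearMap.range (LinearMap.prod LinearMap.id e), ?_, ?_⟩
  · rintro _ ⟨x, rfl⟩
    simp [he, CharTwo.add_self_eq_zero]
  · rw [LinearMap.finrank_range_of_inj, finrank_prod]
    · omega
    · intro x y h
      simpa using congrArg Prod.fst h

theorem Lagr.self [FiniteDimensional E V] [CharP E 2] (Q : QuadraticForm E V) : Lagr (Q.prod Q) :=
  Lagr.graph LinearMap.id (fun _ => rfl) le_rfl

theorem polar_of_isotropic {Q : QuadraticForm E V} {I : Submodule E V} (h : ∀ x ∈ I, Q x = 0)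
    {x y : V} (hx : x ∈ I) (hy : y ∈ I) : polar Q x y = 0 := by
  simp [polar, h _ hx, h _ hy, h _ (I.add_mem hx hy)]

/-- Witt cancellation in terms of Lagrangians. -/
theorem Lagr.cancel [FiniteDimensional E V] [FiniteDimensional E V'] {Q : QuadraticForm E V}
    {Q' : QuadraticForm E V'} (hnd : ND Q') (h : Lagr (Q.prod Q')) (h' : Lagr Q') : Lagr Q := by
  obtain ⟨I, hI, hdI⟩ := h
  obtain ⟨J, hJ, hdJ⟩ := h'
  let A : Submodule E (V × V') := I ⊓ J.comap (LinearMap.snd E V V')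
  let J0 : Submodule E V' := J ⊓ I.comap (LinearMap.inr E V V')
  have hB : (polarBilin Q').Nondegenerate := by
    refine (LinearMap.IsRefl.nondegenerate_iff_separatingLeft ?_).2 ?_
    · intro x y hxy
      simpa [polar_comm] using hxy
    · intro x hx
      exact hnd x fun y => by simpa using hx y
  let J1 : Submodule E V' := LinearMap.BilinForm.orthogonal (polarBilin Q') J0
  have hJ1 : finrank E J1 = finrank E V' - finrank E J0 :=
    LinearMap.BilinForm.finrank_orthogonal hB J0
  have hJ01 : finrank E J0 ≤ finrank E V' := Submodule.finrank_le _
  have hJJ1 : J ≤ J1 := by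
    intro j hj j0 hj0
    exact polar_of_isotropic hJ hj0.1 hj
  have hIJ1 : ∀ x ∈ I, x.2 ∈ J1 := by
    intro x hx j0 hj0
    have := polar_of_isotropic hI (x := (0, j0)) hj0.2 hx
    simpa using this
  -- first count: `I → J1 ⧸ J`
  let g : I →ₗ[E] (V' ⧸ J) := J.mkQ ∘ₗ LinearMap.snd E V V' ∘ₗ I.subtype
  have hg := LinearMap.finrank_range_add_finrank_ker g
  have hgr : finrank E (LinearMap.range g) ≤ finrank E (J1.map J.mkQ) := by
    apply Submodule.finrank_mono
    rintro _ ⟨x, rfl⟩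
    exact ⟨x.1.2, hIJ1 _ x.2, rfl⟩
  have hgk : finrank E (LinearMap.ker g) = finrank E A := by
    have : (LinearMap.ker g).map I.subtype = A := by
      ext x
      simp only [Submodule.mem_map, LinearMap.mem_ker, A, Submodule.mem_inf, Submodule.mem_comap]
      constructor
      · rintro ⟨y, hy, rfl⟩
        exact ⟨y.2, by simpa [g] using hy⟩
      · rintro ⟨h1, h2⟩
        exact ⟨⟨x, h1⟩, by simpa [g] using h2, rfl⟩
    rw [← this, Submodule.finrank_map_subtype_eq]
  have hJq : finrank E (J1.map J.mkQ) + finrank E J = finrank E J1 := by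
    have := LinearMap.finrank_range_add_finrank_ker (J.mkQ ∘ₗ J1.subtype)
    rw [LinearMap.range_comp, Submodule.range_subtype] at this
    rw [← this]
    congr 1
    have h2 : (LinearMap.ker (J.mkQ ∘ₗ J1.subtype)).map J1.subtype = J := by
      ext x
      simp only [Submodule.mem_map, LinearMap.mem_ker]
      constructor
      · rintro ⟨y, hy, rfl⟩
        simpa using hy
      · intro h1
        exact ⟨⟨x, hJJ1 h1⟩, by simpa using h1, rfl⟩
    rw [← Submodule.finrank_map_subtype_eq, h2]
  -- second count: `A → V`
  have hA := LinearMap.finrank_range_add_finrank_ker (LinearMap.fst E V V' ∘ₗ A.subtype)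
  rw [LinearMap.range_comp, Submodule.range_subtype] at hA
  have hAk : finrank E (LinearMap.ker (LinearMap.fst E V V' ∘ₗ A.subtype)) ≤ finrank E J0 := by
    let p : LinearMap.ker (LinearMap.fst E V V' ∘ₗ A.subtype) →ₗ[E] J0 :=
      LinearMap.codRestrict J0 (LinearMap.snd E V V' ∘ₗ A.subtype ∘ₗ Submodule.subtype _) (by
        rintro ⟨⟨⟨x, y⟩, hx⟩, hk⟩
        have hx0 : x = 0 := by simpa using hk
        subst hx0
        exact ⟨hx.2, hx.1⟩)
    refine LinearMap.finrank_le_finrank_of_injective (f := p) ?_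
    rw [injective_iff_map_eq_zero]
    rintro ⟨⟨⟨x, y⟩, hx⟩, hk⟩ h0
    have hx0 : x = 0 := by simpa using hk
    have hy0 : y = 0 := congrArg Subtype.val h0
    subst hx0 hy0
    rfl
  refine ⟨A.map (LinearMap.fst E V V'), ?_, ?_⟩
  · rintro _ ⟨⟨x, y⟩, hxy, rfl⟩
    have h1 := hI _ hxy.1
    have h2 := hJ _ hxy.2
    simpa [show Q' y = 0 from h2] using h1
  · rw [finrank_prod] at hdI
    omega

theorem prodAssoc_equiv (Q : QuadraticForm E V) (Q' : QuadraticForm E V')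
    (Q'' : QuadraticForm E W) : ((Q.prod Q').prod Q'').Equivalent (Q.prod (Q'.prod Q'')) :=
  ⟨{ LinearEquiv.prodAssoc E V V' W with
      map_app' := fun x => by simp [add_assoc] }⟩

theorem prodComm_equiv (Q : QuadraticForm E V) (Q' : QuadraticForm E V') :
    (Q.prod Q').Equivalent (Q'.prod Q) := ⟨IsometryEquiv.prodComm Q Q'⟩

theorem equiv_of_injective [FiniteDimensional E V] [FiniteDimensional E V']
    {Q : QuadraticForm E V} {Q' : QuadraticForm E V'}
    (e : V →ₗ[E] V') (he : ∀ x, Q' (e x) = Q x) (hinj : Function.Injective e)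
    (hd : finrank E V = finrank E V') : Q.Equivalent Q' :=
  ⟨{ LinearEquiv.ofInjectiveOfFinrankEq e hinj hd with map_app' := fun x => he x }⟩

/-- the binary form `a x² + x y + b y²` -/
noncomputable def Bn (a b : E) : QuadraticForm E (E × E) :=
  a • linMulLin (LinearMap.fst E E E) (LinearMap.fst E E E) +
    linMulLin (LinearMap.fst E E E) (LinearMap.snd E E E) +
    b • linMulLin (LinearMap.snd E E E) (LinearMap.snd E E E)

@[simp] theorem Bn_apply (a b : E) (x : E × E) :
    Bn a b x = a * (x.1 * x.1) + x.1 * x.2 + b * (x.2 * x.2) := by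
  simp [Bn]

theorem polar_Bn [CharP E 2] (a b : E) (x y : E × E) :
    polar (Bn a b) x y = x.1 * y.2 + x.2 * y.1 := by
  have h : (2 : E) = 0 := CharTwo.two_eq_zero
  simp only [polar, Bn_apply, Prod.fst_add, Prod.snd_add]
  linear_combination (a * x.1 * y.1 + b * x.2 * y.2) * h

theorem ND_Bn [CharP E 2] (a b : E) : ND (Bn a b) := by
  rintro ⟨x, y⟩ h
  have h1 := h (1, 0)
  have h2 := h (0, 1)
  rw [polar_Bn] at h1 h2
  simp at h1 h2
  simp [h1, h2]

theorem Lagr_of_isotropic_Bn {a b : E} (x : E × E) (hx : x ≠ 0) (h : Bn a b x = 0) :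
    Lagr (Bn a b) := by
  refine ⟨Submodule.span E {x}, ?_, ?_⟩
  · intro y hy
    obtain ⟨t, rfl⟩ := Submodule.mem_span_singleton.1 hy
    rw [QuadraticMap.map_smul, h]; simp
  · rw [finrank_span_singleton hx]; simp

theorem Lagr_H : Lagr (Bn (0 : E) 0) := Lagr_of_isotropic_Bn (1, 0) (by simp) (by simp)

end lagr
end WK

namespace WK
open QuadraticMap Module

section basechange
variable {F K : Type*} [Field F] [Field K] {n m : ℕ}

/-- Base change of an isometric linear map. -/
theorem exists_map_lin (f : F →+* K) (c : Matrix (Fin n) (Fin n) F) (d : Matrix (Fin m) (Fin m) F)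
    (A : (Fin m → F) →ₗ[F] (Fin n → F)) (hA : ∀ y, Qc c (A y) = Qc d y) :
    ∃ A' : (Fin m → K) →ₗ[K] (Fin n → K), (∀ y, Qc (c.map f) (A' y) = Qc (d.map f) y) ∧
      (∀ v : Fin m → F, A' (fun i => f (v i)) = fun i => f (A v i)) ∧
      (Function.Injective A → Function.Injective A') := by
  have hmap : ∀ v : Fin m → F, (Matrix.toLin' ((LinearMap.toMatrix' A).map f)) (fun i => f (v i))
      = fun i => f (A v i) := by
    intro v
    ext i
    rw [Matrix.toLin'_apply]
    have := RingHom.map_mulVec f (LinearMap.toMatrix' A) v i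
    rw [LinearMap.toMatrix'_mulVec] at this
    exact this.symm
  have hs : ∀ i : Fin m, (Pi.single i (1 : K) : Fin m → K)
      = fun j => f ((Pi.single i (1 : F) : Fin m → F) j) := by
    intro i; ext j; by_cases h : j = i
    · subst h; simp
    · simp [h]
  refine ⟨Matrix.toLin' ((LinearMap.toMatrix' A).map f), ?_, hmap, ?_⟩
  · intro y
    refine qc_ext ((Qc (c.map f)).comp (Matrix.toLin' ((LinearMap.toMatrix' A).map f)))
      (Qc (d.map f)) ?_ ?_ y
    · intro i
      rw [QuadraticMap.comp_apply, hs, hmap, Qc_map, Qc_map, hA]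
    · intro i j
      have : ∀ x y, polar ((Qc (c.map f)).comp (Matrix.toLin' ((LinearMap.toMatrix' A).map f))) x y
        = polar (Qc (c.map f)) (Matrix.toLin' ((LinearMap.toMatrix' A).map f) x)
          (Matrix.toLin' ((LinearMap.toMatrix' A).map f) y) := by
        intro x y; simp only [polar, QuadraticMap.comp_apply, _root_.map_add]
      rw [this, hs, hs, hmap, hmap, polar_map, polar_map, polar_equiv A hA]
  · intro hinj
    obtain ⟨g, hg⟩ := LinearMap.exists_leftInverse_of_injective A (LinearMap.ker_eq_bot.2 hinj)
    have h1 : (LinearMap.toMatrix' g).map f * (LinearMap.toMatrix' A).map f = 1 := by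
      rw [← Matrix.map_mul, ← LinearMap.toMatrix'_comp, hg, LinearMap.toMatrix'_id]
      simp
    refine Function.LeftInverse.injective (g := Matrix.toLin' ((LinearMap.toMatrix' g).map f)) ?_
    intro x
    rw [← Matrix.toLin'_mul_apply, h1, Matrix.toLin'_one]; rfl

theorem Lagr.map (f : F →+* K) {c : Matrix (Fin n) (Fin n) F} (h : Lagr (Qc c)) :
    Lagr (Qc (c.map f)) := by
  obtain ⟨I, hI, hd⟩ := h
  let b := finBasis F I
  let A : (Fin (finrank F I) → F) →ₗ[F] (Fin n → F) := I.subtype ∘ₗ b.equivFun.symm.toLinearMap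
  obtain ⟨A', h1, -, h3⟩ := exists_map_lin f c 0 A (fun y => by
    rw [show Qc c (A y) = 0 from hI _ (Subtype.property _)]; simp [Qc_apply])
  refine ⟨LinearMap.range A', ?_, ?_⟩
  · rintro _ ⟨x, rfl⟩
    rw [h1]; simp [Qc_apply]
  · rw [LinearMap.finrank_range_of_inj (h3 (I.injective_subtype.comp b.equivFun.symm.injective))]
    simpa using hd

theorem exists_complement {V : Type*} [AddCommGroup V] [Module F V] [FiniteDimensional F V]
    [CharP F 2] {Q : QuadraticForm F V} (hQ : ND Q) {y : V} (hy : y ≠ 0) :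
    ∃ (k : ℕ) (c : Matrix (Fin k) (Fin k) F) (A : (Fin k → F) →ₗ[F] V),
      k + 2 = finrank F V ∧ ND (Qc c) ∧ (∀ u, Q (A u) = Qc c u) ∧ ∀ u, polar Q (A u) y = 0 := by
  obtain ⟨z0, hz0⟩ : ∃ z, polar Q y z ≠ 0 := by
    by_contra h
    push Not at h
    exact hy (hQ y h)
  obtain ⟨z, hz⟩ : ∃ z, polar Q y z = 1 := ⟨(polar Q y z0)⁻¹ • z0, by simp [hz0]⟩
  have hself : ∀ v, polar Q v v = 0 := by
    intro v; rw [polar_self]; simp [CharTwo.two_eq_zero]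
  let g : V →ₗ[F] F × F := (polarBilin Q y).prod (polarBilin Q z)
  have hg : ∀ v, g v = (polar Q y v, polar Q z v) := fun v => rfl
  have hzy : polar Q z y = 1 := by rw [polar_comm, hz]
  have hsurj : Function.Surjective g := by
    rintro ⟨s, t⟩
    refine ⟨s • z + t • y, ?_⟩
    rw [hg]
    simp [hself, hz, hzy]
  have hrk := LinearMap.finrank_range_add_finrank_ker g
  rw [LinearMap.range_eq_top.2 hsurj, finrank_top, finrank_prod, finrank_self] at hrk
  let b := finBasis F (LinearMap.ker g)
  let A : (Fin (finrank F (LinearMap.ker g)) → F) →ₗ[F] V :=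
    (LinearMap.ker g).subtype ∘ₗ b.equivFun.symm.toLinearMap
  have hAinj : Function.Injective A :=
    (LinearMap.ker g).injective_subtype.comp b.equivFun.symm.injective
  have hAk : ∀ u, g (A u) = 0 := fun u => LinearMap.mem_ker.1 (Subtype.property _)
  have hAy : ∀ u, polar Q y (A u) = 0 := fun u => congrArg Prod.fst (hAk u)
  have hAz : ∀ u, polar Q z (A u) = 0 := fun u => congrArg Prod.snd (hAk u)
  have hAs : ∀ v, g v = 0 → ∃ u, A u = v := by
    intro v hv
    refine ⟨b.equivFun ⟨v, hv⟩, ?_⟩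
    simp [A]
  obtain ⟨c, hc⟩ := exists_Qc (Q.comp A)
  have hc' : ∀ u, Q (A u) = Qc c u := fun u => by rw [hc]; rfl
  refine ⟨_, c, A, by omega, ?_, hc', fun u => by rw [polar_comm, hAy]⟩
  intro u hu
  apply hAinj
  rw [map_zero]
  refine hQ _ fun v => ?_
  obtain ⟨w, hw⟩ := hAs (v - polar Q y v • z - polar Q z v • y) (by
    rw [hg]; simp [hself, hz, hzy])
  have hv : v = A w + polar Q y v • z + polar Q z v • y := by rw [hw]; abel
  rw [hv]
  have h0 : polar Q (A u) (A w) = 0 := by rw [polar_equiv A hc', hu]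
  have h1 : polar Q (A u) y = 0 := by rw [polar_comm, hAy]
  have h2 : polar Q (A u) z = 0 := by rw [polar_comm, hAz]
  simp [h0, h1, h2]

theorem estep [CharP F 2] (f : F →+* K) (hK : ∀ x : K, ∃ y : F, f y = x ^ 2)
    (c : Matrix (Fin n) (Fin n) F) (hc : ND (Qc c)) (I : Submodule K (Fin n → K))
    (hI : ∀ x ∈ I, Qc (c.map f) x = 0) (k : ℕ) (hk : k + 1 ≤ finrank K I) :
    ∃ (m : ℕ) (d : Matrix (Fin m) (Fin m) F), m + 2 = n ∧ ND (Qc d) ∧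
      ((Bn (0 : K) 0).prod (Qc (d.map f))).Equivalent (Qc (c.map f)) ∧
      ∃ J : Submodule K (Fin m → K), (∀ x ∈ J, Qc (d.map f) x = 0) ∧ k ≤ finrank K J := by
  haveI : CharP K 2 := charP_of_injective_ringHom f.injective 2
  have two : (2 : K) = 0 := CharTwo.two_eq_zero
  -- choose the isotropic vector and a rational partner
  obtain ⟨x0, hx0I, hx0⟩ : ∃ x ∈ I, x ≠ 0 := by
    have : I ≠ ⊥ := by
      rintro rfl
      simp at hk
    exact Submodule.exists_mem_ne_zero_of_ne_bot this
  have hcK : ∀ v : Fin n → K, (∀ i, polar (Qc (c.map f)) v (Pi.single i 1) = 0) → v = 0 := by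
    intro v hv
    have h1 : ((c + c.transpose).map f).mulVec v = 0 := by
      ext i
      have := hv i
      rw [polar_Qc, single_one_dotProduct] at this
      rw [Pi.zero_apply, ← this]
      congr 2
      ext i j; simp
    have hu : IsUnit (c + c.transpose) := by
      rw [← Matrix.mulVec_injective_iff_isUnit]
      rw [← Matrix.coe_mulVecLin, injective_iff_map_eq_zero]
      intro u hu
      refine hc u fun y => ?_
      rw [polar_Qc, show (c + c.transpose).mulVec u = 0 from hu]; simp
    have hu' : IsUnit ((c + c.transpose).map f) := by
      have := hu.map (RingHom.mapMatrix f : Matrix (Fin n) (Fin n) F →+* _)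
      simpa using this
    rw [← Matrix.mulVec_injective_iff_isUnit] at hu'
    exact hu' (by rw [h1]; simp)
  obtain ⟨i0, hi0⟩ : ∃ i, polar (Qc (c.map f)) x0 (Pi.single i 1) ≠ 0 := by
    by_contra h
    push Not at h
    exact hx0 (hcK x0 h)
  set Q := Qc (c.map f) with hQ
  have hNDK : ND Q := fun v hv => hcK v fun i => hv _
  let y : Fin n → F := Pi.single i0 1
  let yK : Fin n → K := fun i => f (y i)
  have hyK : yK = Pi.single i0 1 := by
    ext j; by_cases h : j = i0
    · subst h; simp [yK, y]
    · simp [yK, y, h]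
  obtain ⟨x, hxI, hxy⟩ : ∃ x ∈ I, polar Q x yK = 1 := by
    refine ⟨(polar Q x0 (Pi.single i0 1))⁻¹ • x0, I.smul_mem _ hx0I, ?_⟩
    rw [hyK]
    simp [hi0]
  have hQx : Q x = 0 := hI x hxI
  have hxne : x ≠ 0 := by rintro rfl; simp at hxy
  obtain ⟨m, c0, A, hm, hc0, hA, hAy⟩ := exists_complement hc (y := y) (by simp [y])
  obtain ⟨A', hA', hA'f, -⟩ := exists_map_lin f c c0 A hA
  have hs : ∀ i : Fin m, (Pi.single i (1 : K) : Fin m → K)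
      = fun j => f ((Pi.single i (1 : F) : Fin m → F) j) := by
    intro i; ext j; by_cases h : j = i
    · subst h; simp
    · simp [h]
  have hsum : ∀ u : Fin m → K, u = ∑ i, u i • (Pi.single i (1 : K) : Fin m → K) := by
    intro u; ext j; simp [Finset.sum_apply, Pi.single_apply]
  have hA'y : ∀ u, polar Q (A' u) yK = 0 := by
    intro u
    rw [hsum u, map_sum, ← polarBilin_apply_apply, map_sum, LinearMap.sum_apply]
    refine Finset.sum_eq_zero fun i _ => ?_
    rw [map_smul, hs, hA'f, map_smul, LinearMap.smul_apply, polarBilin_apply_apply, hQ, polar_map,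
      hAy]
    simp
  let lam : (Fin m → K) →ₗ[K] K := (polarBilin Q x) ∘ₗ A'
  have hlam : ∀ u, lam u = polar Q x (A' u) := fun u => rfl
  choose g hg using fun i => hK (lam (Pi.single i 1))
  let β : F := Qc c y
  have hβ : Q yK = f β := Qc_map f c y
  let d : Matrix (Fin m) (Fin m) F := c0 + Matrix.diagonal fun i => β * g i
  have hd : ∀ u, Qc (d.map f) u = Qc (c0.map f) u + f β * lam u ^ 2 := by
    intro u
    have : d.map f = c0.map f + Matrix.diagonal fun i => f β * f (g i) := by
      ext i j
      by_cases h : i = j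
      · subst h; simp [d]
      · simp [d, Matrix.diagonal_apply_ne _ h]
    rw [this, Qc_add, Qc_diagonal]
    congr 1
    conv_rhs => rw [hsum u]
    rw [map_sum, CharTwo.sum_sq, Finset.mul_sum]
    refine Finset.sum_congr rfl fun i _ => ?_
    rw [map_smul, smul_eq_mul, hg]; ring
  have hdND : ND (Qc d) := by
    intro u hu
    refine hc0 u fun v => ?_
    rw [← hu v, polar_Qc, polar_Qc]
    congr 2
    ext i j
    by_cases h : i = j
    · subst h
      have t2 : (2 : F) = 0 := CharTwo.two_eq_zero
      simp only [d, Matrix.add_apply, Matrix.transpose_apply, Matrix.diagonal_apply_eq]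
      linear_combination (-β * g i) * t2
    · simp [d, Matrix.diagonal_apply_ne _ h, Matrix.diagonal_apply_ne' _ h]
  let T : ((K × K) × (Fin m → K)) →ₗ[K] (Fin n → K) :=
    LinearMap.coprod
      (LinearMap.coprod (LinearMap.toSpanSingleton K _ x)
        (LinearMap.toSpanSingleton K _ (yK + f β • x)))
      (A' + (LinearMap.toSpanSingleton K _ yK) ∘ₗ lam)
  have hT : ∀ s t u, T ((s, t), u) = (s + t * f β) • x + (t + lam u) • yK + A' u := by
    intro s t u
    simp only [T, LinearMap.coprod_apply, LinearMap.toSpanSingleton_apply, LinearMap.add_apply,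
      LinearMap.comp_apply]
    module
  have hTQ : ∀ w, Q (T w) = ((Bn (0 : K) 0).prod (Qc (d.map f))) w := by
    rintro ⟨⟨s, t⟩, u⟩
    rw [hT, QuadraticMap.map_add Q, QuadraticMap.map_add Q, QuadraticMap.map_smul,
      QuadraticMap.map_smul, hA', polar_add_left, polar_smul_left, polar_smul_left,
      polar_smul_left, polar_smul_right, hxy, hQx, hβ, polar_comm Q yK, hA'y, ← hlam]
    rw [QuadraticMap.prod_apply, hd, Bn_apply]
    simp only [smul_eq_mul]
    linear_combination (f β * t * t + f β * t * lam u + (s + t * f β) * lam u) * two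
  have hNDd : ND (Qc (d.map f)) := by
    have hu : IsUnit (d + d.transpose) := by
      rw [← Matrix.mulVec_injective_iff_isUnit]
      rw [← Matrix.coe_mulVecLin, injective_iff_map_eq_zero]
      intro u hu
      refine hdND u fun y => ?_
      rw [polar_Qc, show (d + d.transpose).mulVec u = 0 from hu]; simp
    have hu' : IsUnit ((d + d.transpose).map f) := by
      have := hu.map (RingHom.mapMatrix f : Matrix (Fin m) (Fin m) F →+* _)
      simpa using this
    rw [← Matrix.mulVec_injective_iff_isUnit] at hu'
    intro v hv
    refine hu' ?_
    simp only [Matrix.mulVec_zero]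
    ext i
    have := hv (Pi.single i 1)
    rw [polar_Qc, single_one_dotProduct] at this
    rw [Pi.zero_apply, ← this]
    congr 2
    ext i j; simp
  have hTinj : Function.Injective T := ((ND_Bn 0 0).prod hNDd).injective T hTQ
  have hfr : finrank K ((K × K) × (Fin m → K)) = finrank K (Fin n → K) := by
    rw [finrank_fin_fun] at hm
    simp [finrank_prod]; omega
  have hTsurj : Function.Surjective T :=
    (LinearMap.injective_iff_surjective_of_finrank_eq_finrank hfr).1 hTinj
  refine ⟨m, d, by simpa using hm, hdND, equiv_of_injective T hTQ hTinj hfr,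
    (I.comap T).map (LinearMap.snd K (K × K) (Fin m → K)), ?_, ?_⟩
  · rintro _ ⟨⟨⟨s, t⟩, u⟩, hw, rfl⟩
    have h1 : polar Q x (T ((s, t), u)) = 0 := polar_of_isotropic hI hxI hw
    have ht : t = 0 := by
      rw [hT, polar_add_right, polar_add_right, polar_smul_right, polar_smul_right, hxy, ← hlam,
        polar_self, hQx] at h1
      simp only [smul_eq_mul] at h1
      linear_combination h1 - lam u * two
    have h2 := hI _ hw
    rw [hTQ] at h2
    simpa [ht] using h2
  · have hmapT : (I.comap T).map T = I := Submodule.map_comap_eq_of_surjective hTsurj I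
    have hIT : finrank K I ≤ finrank K (I.comap T) := by
      have := Submodule.finrank_map_le T (I.comap T)
      rwa [hmapT] at this
    have h3 := LinearMap.finrank_range_add_finrank_ker
      (LinearMap.snd K (K × K) (Fin m → K) ∘ₗ (I.comap T).subtype)
    rw [LinearMap.range_comp, Submodule.range_subtype] at h3
    have h4 : finrank K (LinearMap.ker
        (LinearMap.snd K (K × K) (Fin m → K) ∘ₗ (I.comap T).subtype)) ≤ 1 := by
      let p : LinearMap.ker (LinearMap.snd K (K × K) (Fin m → K) ∘ₗ (I.comap T).subtype) →ₗ[K] K :=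
        LinearMap.fst K K K ∘ₗ LinearMap.fst K (K × K) (Fin m → K) ∘ₗ (I.comap T).subtype ∘ₗ
          Submodule.subtype _
      have := LinearMap.finrank_le_finrank_of_injective (f := p) ?_
      · simpa using this
      · rw [injective_iff_map_eq_zero]
        rintro ⟨⟨⟨⟨s, t⟩, u⟩, hw⟩, hk⟩ h0
        have hu : u = 0 := by simpa using hk
        have hs0 : s = 0 := h0
        have h1 : polar Q x (T ((s, t), u)) = 0 := polar_of_isotropic hI hxI hw
        have ht : t = 0 := by
          rw [hT, polar_add_right, polar_add_right, polar_smul_right, polar_smul_right, hxy, ← hlam,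
            polar_self, hQx] at h1
          simp only [smul_eq_mul] at h1
          linear_combination h1 - lam u * two
        subst hu hs0 ht
        rfl
    omega

theorem eplus [CharP F 2] (f : F →+* K) (hK : ∀ x : K, ∃ y : F, f y = x ^ 2) (k : ℕ) :
    ∀ (n : ℕ) (c : Matrix (Fin n) (Fin n) F), ND (Qc c) → ∀ (I : Submodule K (Fin n → K)),
    (∀ x ∈ I, Qc (c.map f) x = 0) → k ≤ finrank K I →
    ∃ (m : ℕ) (d : Matrix (Fin m) (Fin m) F), m + 2 * k = n ∧ ND (Qc d) ∧
      Lagr ((Qc (c.map f)).prod (Qc (d.map f))) := by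
  haveI : CharP K 2 := charP_of_injective_ringHom f.injective 2
  induction k with
  | zero =>
    intro n c hc I hI hk
    exact ⟨n, c, rfl, hc, Lagr.self _⟩
  | succ k ih =>
    intro n c hc I hI hk
    obtain ⟨m, d, hm, hd, he, J, hJ, hkJ⟩ := estep f hK c hc I hI k hk
    obtain ⟨m', d', hm', hd', hl⟩ := ih m d hd J hJ hkJ
    refine ⟨m', d', by omega, hd', ?_⟩
    refine Lagr.equiv ((Lagr_H (E := K)).prod hl) ?_
    refine (prodAssoc_equiv _ _ _).symm.trans ?_
    exact QuadraticMap.Equivalent.prod he (QuadraticMap.Equivalent.refl _)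

end basechange
end WK

namespace WK
open QuadraticMap Module

/-- Anisotropy. -/
def An {E V : Type*} [CommRing E] [AddCommGroup V] [Module E V] (Q : QuadraticForm E V) : Prop :=
  ∀ x, Q x = 0 → x = 0

section isoext
variable {E : Type*} [Field E] {V : Type*} [AddCommGroup V] [Module E V]

/-- Reflections move one vector to another one of the same length. -/
theorem refl_exists {Q : QuadraticForm E V} (hQ : An Q) (x y : V) (h : Q x = Q y) :
    ∃ s : V →ₗ[E] V, (∀ v, Q (s v) = Q v) ∧ s x = y ∧
      ∀ v, polar Q v x = polar Q v y → s v = v := by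
  by_cases hr : x - y = 0
  · exact ⟨LinearMap.id, fun _ => rfl, sub_eq_zero.1 hr, fun _ _ => rfl⟩
  have hr' : Q (x - y) ≠ 0 := fun h => hr (hQ _ h)
  let s : V →ₗ[E] V := LinearMap.id -
    (LinearMap.toSpanSingleton E V ((Q (x - y))⁻¹ • (x - y))) ∘ₗ (polarBilin Q (x - y))
  have hs : ∀ v, s v = v - (polar Q (x - y) v * (Q (x - y))⁻¹) • (x - y) := by
    intro v
    simp only [s, LinearMap.sub_apply, LinearMap.id_apply, LinearMap.comp_apply,
      LinearMap.toSpanSingleton_apply, polarBilin_apply_apply, smul_smul]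
  refine ⟨s, ?_, ?_, ?_⟩
  · intro v
    rw [hs, sub_eq_add_neg, ← neg_smul, QuadraticMap.map_add Q, QuadraticMap.map_smul,
      polar_smul_right, polar_comm Q v]
    simp only [smul_eq_mul]
    field_simp
    ring
  · have : polar Q (x - y) x = Q (x - y) := by
      have h1 : Q y = Q (y - x) + Q x + polar Q (y - x) x := by
        conv_lhs => rw [show y = (y - x) + x by abel, QuadraticMap.map_add Q]
      have h2 : y - x = -(x - y) := by abel
      rw [h2, QuadraticMap.map_neg, polar_neg_left] at h1
      linear_combination h1 + h
    rw [hs, this, mul_inv_cancel₀ hr']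
    simp
  · intro v hv
    rw [hs, polar_sub_left, polar_comm Q x, polar_comm Q y, hv]
    simp

theorem iso_ext {Q : QuadraticForm E V} (hQ : An Q) : ∀ (m : ℕ) (σ τ : Fin m → V),
    (∀ i, Q (σ i) = Q (τ i)) → (∀ i j, polar Q (σ i) (σ j) = polar Q (τ i) (τ j)) →
    ∃ g : V →ₗ[E] V, (∀ v, Q (g v) = Q v) ∧ ∀ i, g (σ i) = τ i := by
  intro m
  induction m with
  | zero => exact fun σ τ _ _ => ⟨LinearMap.id, fun _ => rfl, fun i => i.elim0⟩
  | succ m ih =>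
    intro σ τ h hp
    obtain ⟨g, hg, hgσ⟩ := ih (fun i => σ i.castSucc) (fun i => τ i.castSucc) (fun i => h _)
      (fun i j => hp _ _)
    obtain ⟨s, hs, hs1, hs2⟩ := refl_exists hQ (g (σ (Fin.last m))) (τ (Fin.last m))
      (by rw [hg, h])
    refine ⟨s ∘ₗ g, fun v => by rw [LinearMap.comp_apply, hs, hg], fun i => ?_⟩
    induction i using Fin.lastCases with
    | last => exact hs1
    | cast i =>
      rw [LinearMap.comp_apply, hgσ]
      apply hs2
      rw [← hgσ, polar_equiv g hg, hp, hgσ]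

end isoext

section poly
open Polynomial
variable {K : Type*} [Field K] {n : ℕ}

theorem coeff_Qc (c : Matrix (Fin n) (Fin n) K) (p : Fin n → K[X]) (D : ℕ)
    (hp : ∀ i, (p i).natDegree ≤ D) :
    (Qc (c.map C) p).coeff (D + D) = Qc c (fun i => (p i).coeff D) := by
  rw [Qc_apply, Qc_apply, finsetSum_coeff]
  refine Finset.sum_congr rfl fun i _ => ?_
  rw [finsetSum_coeff]
  refine Finset.sum_congr rfl fun j _ => ?_
  rw [Matrix.map_apply, mul_assoc, coeff_C_mul, coeff_mul_add_eq_of_natDegree_le (hp i) (hp j),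
    mul_assoc]

theorem natDegree_Qc_le (c : Matrix (Fin n) (Fin n) K) (p : Fin n → K[X]) (D : ℕ)
    (hp : ∀ i, (p i).natDegree ≤ D) : (Qc (c.map C) p).natDegree ≤ D + D := by
  rw [Qc_apply]
  refine natDegree_sum_le_of_forall_le _ _ fun i _ => natDegree_sum_le_of_forall_le _ _ fun j _ => ?_
  rw [Matrix.map_apply, mul_assoc]
  exact (natDegree_C_mul_le _ _).trans (natDegree_mul_le.trans (add_le_add (hp i) (hp j)))

theorem coeff_polar (c : Matrix (Fin n) (Fin n) K) (p q : Fin n → K[X]) (D : ℕ)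
    (hp : ∀ i, (p i).natDegree ≤ D) (hq : ∀ i, (q i).natDegree ≤ D) :
    (polar (Qc (c.map C)) p q).coeff (D + D)
      = polar (Qc c) (fun i => (p i).coeff D) (fun i => (q i).coeff D) := by
  simp only [polar, coeff_sub]
  rw [coeff_Qc c p D hp, coeff_Qc c q D hq, coeff_Qc c (p + q) D fun i =>
    (natDegree_add_le _ _).trans (max_le (hp i) (hq i))]
  congr 3

theorem deg_bound {c : Matrix (Fin n) (Fin n) K} (hc : An (Qc c)) (p : Fin n → K[X]) (D : ℕ)
    (h : (Qc (c.map C) p).natDegree ≤ D + D) (i : Fin n) : (p i).natDegree ≤ D := by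
  obtain ⟨i0, -, hi0⟩ := Finset.exists_max_image Finset.univ (fun i => (p i).natDegree)
    ⟨i, Finset.mem_univ i⟩
  by_contra hlt
  push Not at hlt
  have hi := hi0 i (Finset.mem_univ _)
  have h1 := coeff_Qc c p (p i0).natDegree (fun j => hi0 j (Finset.mem_univ _))
  rw [coeff_eq_zero_of_natDegree_lt (by omega)] at h1
  have h2 := congrFun (hc _ h1.symm) i0
  simp only [Pi.zero_apply, coeff_natDegree, leadingCoeff_eq_zero] at h2
  rw [h2, natDegree_zero] at hi
  omega

theorem An_poly {c : Matrix (Fin n) (Fin n) K} (hc : An (Qc c)) : An (Qc (c.map C)) := by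
  intro p hp
  have h := deg_bound hc p 0 (by simp [hp])
  have h1 := coeff_Qc c p 0 (fun i => h i)
  rw [hp, coeff_zero] at h1
  have h2 := hc _ h1.symm
  ext1 i
  rw [eq_C_of_natDegree_le_zero (h i), congrFun h2 i]
  simp

/-- The constants in the rational function field. -/
noncomputable abbrev rc (K : Type*) [Field K] : K →+* RatFunc K := algebraMap K (RatFunc K)

theorem rc_eq : rc K = (algebraMap K[X] (RatFunc K)).comp C := by
  ext x; simp [rc]

theorem map_rc (c : Matrix (Fin n) (Fin n) K) :
    c.map (rc K) = (c.map C).map (algebraMap K[X] (RatFunc K)) := by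
  ext i j; simp

theorem clear_denom {m : ℕ} (σ : Fin m → Fin n → RatFunc K) : ∃ (g : K[X]) (p : Fin m → Fin n → K[X]),
    g ≠ 0 ∧ ∀ i, algebraMap K[X] (RatFunc K) g • σ i
      = fun j => algebraMap K[X] (RatFunc K) (p i j) := by
  obtain ⟨g, hg⟩ := IsLocalization.exist_integer_multiples_of_finite (nonZeroDivisors K[X])
    (fun ij : Fin m × Fin n => σ ij.1 ij.2)
  choose p hp using hg
  refine ⟨g, fun i j => p (i, j), nonZeroDivisors.ne_zero g.2, fun i => ?_⟩
  ext1 j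
  rw [hp (i, j)]
  simp [Algebra.smul_def]

theorem alg_inj : Function.Injective (algebraMap K[X] (RatFunc K)) :=
  IsFractionRing.injective _ _

theorem An_ratFunc {c : Matrix (Fin n) (Fin n) K} (hc : An (Qc c)) : An (Qc (c.map (rc K))) := by
  intro x hx
  obtain ⟨g, p, hg, hp⟩ := clear_denom (fun _ : Fin 1 => x)
  have h := hp 0
  have h1 : Qc (c.map (rc K)) (fun j => algebraMap K[X] (RatFunc K) (p 0 j)) = 0 := by
    rw [← h, QuadraticMap.map_smul, hx, smul_zero]
  rw [map_rc, Qc_map, map_eq_zero_iff _ alg_inj] at h1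
  have h2 := An_poly hc _ h1
  rw [h2] at h
  have h3 : algebraMap K[X] (RatFunc K) g • x = 0 := by rw [h]; ext; simp
  exact (smul_eq_zero.1 h3).resolve_left (fun h0 => hg ((map_eq_zero_iff _ alg_inj).1 h0))

theorem specialize {c : Matrix (Fin n) (Fin n) K} (hc : An (Qc c)) {m : ℕ}
    (σ : Fin m → Fin n → RatFunc K) (α : Fin m → K) (β : Fin m → Fin m → K)
    (hα : ∀ i, Qc (c.map (rc K)) (σ i) = rc K (α i))
    (hβ : ∀ i j, polar (Qc (c.map (rc K))) (σ i) (σ j) = rc K (β i j)) :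
    ∃ τ : Fin m → Fin n → K, (∀ i, Qc c (τ i) = α i) ∧ ∀ i j, polar (Qc c) (τ i) (τ j) = β i j := by
  obtain ⟨g, p, hg, hp⟩ := clear_denom σ
  have hQ : ∀ i, Qc (c.map C) (p i) = C (α i) * (g * g) := by
    intro i
    apply alg_inj
    rw [← Qc_map, ← hp, ← map_rc, QuadraticMap.map_smul, hα, rc_eq]
    simp [mul_comm]
  have hP : ∀ i j, polar (Qc (c.map C)) (p i) (p j) = C (β i j) * (g * g) := by
    intro i j
    apply alg_inj
    rw [← polar_map, ← hp, ← hp, ← map_rc, polar_smul_left, polar_smul_right, hβ, rc_eq]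
    simp only [RingHom.comp_apply, smul_eq_mul, map_mul]
    ring
  have hdeg : ∀ i j, (p i j).natDegree ≤ g.natDegree := by
    intro i j
    refine deg_bound hc _ _ ?_ j
    rw [hQ]
    exact (natDegree_C_mul_le _ _).trans natDegree_mul_le
  have hl : g.leadingCoeff ≠ 0 := leadingCoeff_ne_zero.2 hg
  refine ⟨fun i => (g.leadingCoeff)⁻¹ • fun j => (p i j).coeff g.natDegree, fun i => ?_,
    fun i j => ?_⟩
  · rw [QuadraticMap.map_smul, ← coeff_Qc c (p i) _ (hdeg i), hQ, coeff_C_mul,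
      coeff_mul_add_eq_of_natDegree_le le_rfl le_rfl, coeff_natDegree]
    simp only [smul_eq_mul]
    field_simp
  · rw [polar_smul_left, polar_smul_right, ← coeff_polar c (p i) (p j) _ (hdeg i) (hdeg j), hP,
      coeff_C_mul, coeff_mul_add_eq_of_natDegree_le le_rfl le_rfl, coeff_natDegree]
    simp only [smul_eq_mul]
    field_simp

/-- The Cassels-Pfister theorem with linear constraints. -/
theorem cassels_pfister {c : Matrix (Fin n) (Fin n) K} (hc : An (Qc c)) {m : ℕ}
    (u : Fin m → Fin n → K) (e : K[X]) (l : Fin m → K[X]) : ∀ (D : ℕ) (g : K[X]) (f : Fin n → K[X]),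
    g.natDegree ≤ D → g ≠ 0 → Qc (c.map C) f = e * g ^ 2 →
    (∀ i, polar (Qc (c.map C)) f (fun j => C (u i j)) = l i * g) →
    ∃ p : Fin n → K[X], Qc (c.map C) p = e ∧
      ∀ i, polar (Qc (c.map C)) p (fun j => C (u i j)) = l i := by
  intro D
  induction D using Nat.strong_induction_on with
  | _ D ih =>
  intro g f hD hg hQ hB
  set Q := Qc (c.map C) with hQdef
  let s : Fin n → K[X] := fun i => f i / g
  let r : Fin n → K[X] := fun i => f i % g
  have hf : f = g • s + r := by
    ext1 i
    simp only [Pi.add_apply, Pi.smul_apply, smul_eq_mul, s, r]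
    exact (EuclideanDomain.div_add_mod _ _).symm
  by_cases hr : r = 0
  · rw [hr, add_zero] at hf
    refine ⟨s, ?_, fun i => ?_⟩
    · rw [hf, QuadraticMap.map_smul, smul_eq_mul] at hQ
      exact mul_left_cancel₀ (mul_ne_zero hg hg) (by rw [hQ]; ring)
    · have := hB i
      rw [hf, polar_smul_left, smul_eq_mul] at this
      exact mul_left_cancel₀ hg (by rw [this]; ring)
  have hg0 : g.natDegree ≠ 0 := by
    intro h0
    apply hr
    ext1 i
    have h1 : g.coeff 0 ≠ 0 := by
      intro h1
      rw [eq_C_of_natDegree_eq_zero h0, h1] at hg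
      simp at hg
    exact EuclideanDomain.mod_eq_zero.2 (IsUnit.dvd
      (Polynomial.isUnit_iff.2 ⟨g.coeff 0, h1.isUnit, (eq_C_of_natDegree_eq_zero h0).symm⟩))
  have hrdeg : ∀ i, (r i).natDegree ≤ g.natDegree - 1 := fun i => by
    have := natDegree_mod_lt (f i) hg0
    simp only [r]; omega
  -- constraints
  have hru : ∀ i, polar Q r (fun j => C (u i j)) = 0 := by
    intro i
    have h1 := hB i
    rw [hf, polar_add_left, polar_smul_left, smul_eq_mul] at h1
    by_contra hne
    have h2 : g ∣ polar Q r (fun j => C (u i j)) :=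
      ⟨l i - polar Q s (fun j => C (u i j)), by linear_combination h1⟩
    have h3 := natDegree_le_of_dvd h2 hne
    have h4 : (polar Q r (fun j => C (u i j))).natDegree ≤ g.natDegree - 1 := by
      rw [hQdef, polar_Qc, dotProduct]
      refine natDegree_sum_le_of_forall_le _ _ fun j _ => ?_
      refine (natDegree_C_mul_le _ _).trans ?_
      rw [Matrix.mulVec, dotProduct]
      refine natDegree_sum_le_of_forall_le _ _ fun k _ => ?_
      have : (c.map C + (c.map C).transpose) j k = C (c j k + c k j) := by simp
      rw [this]
      exact (natDegree_C_mul_le _ _).trans (hrdeg k)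
    omega
  have hsu : ∀ i, polar Q s (fun j => C (u i j)) = l i := by
    intro i
    have h1 := hB i
    rw [hf, polar_add_left, polar_smul_left, smul_eq_mul, hru, add_zero] at h1
    exact mul_left_cancel₀ hg (by rw [h1]; ring)
  let h : K[X] := e * g - g * Q s - polar Q s r
  have hQr : Q r = g * h := by
    rw [hf, QuadraticMap.map_add Q, QuadraticMap.map_smul, polar_smul_left] at hQ
    simp only [smul_eq_mul] at hQ
    simp only [h]
    linear_combination hQ
  have hQr0 : Q r ≠ 0 := fun h0 => hr (An_poly hc _ h0)
  have hh : h ≠ 0 := by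
    rintro h0
    exact hQr0 (by rw [hQr, h0, mul_zero])
  have hhdeg : h.natDegree < g.natDegree := by
    have h1 := natDegree_Qc_le c r _ hrdeg
    rw [← hQdef, hQr, natDegree_mul hg hh] at h1
    omega
  refine ih h.natDegree (by omega) h (h • s + (Q s - e) • r) le_rfl hh ?_ ?_
  · rw [QuadraticMap.map_add Q, QuadraticMap.map_smul, QuadraticMap.map_smul, polar_smul_left,
      polar_smul_right, hQr]
    simp only [smul_eq_mul]
    have : polar Q s r = e * g - g * Q s - h := by simp only [h]; ring
    rw [this]
    ring
  · intro i
    rw [polar_add_left, polar_smul_left, polar_smul_left, hru, hsu]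
    simp [mul_comm]

end poly
end WK

namespace WK
open QuadraticMap Module

section slemma
open Polynomial
universe v

/-- The matrix of the substitution `(y₀,y₁,…) ↦ (y₀, t y₀, y₁, …)`. -/
def Pm {R : Type*} [CommRing R] (N : ℕ) (t : R) : Matrix (Fin (N + 1 + 1)) (Fin (N + 1)) R :=
  Matrix.of (Fin.cons (Pi.single 0 1) (Fin.cons (Pi.single 0 t) fun j => Pi.single j.succ 1))

theorem single_map {R S : Type*} [CommRing R] [CommRing S] (f : R →+* S) {n : ℕ} (i : Fin n) (t : R) :
    (fun k => f ((Pi.single i t : Fin n → R) k)) = Pi.single i (f t) := by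
  ext j; by_cases h : j = i
  · subst h; simp
  · simp [h]

theorem Pm_map {R S : Type*} [CommRing R] [CommRing S] (f : R →+* S) (N : ℕ) (t : R) :
    (Pm N t).map f = Pm N (f t) := by
  ext i j
  refine Fin.cases ?_ (fun i => Fin.cases ?_ (fun i => ?_) i) i
  · simp only [Pm, Matrix.map_apply, Matrix.of_apply, Fin.cons_zero]
    exact (congrFun (single_map f _ _) j).trans (by simp)
  · simp only [Pm, Matrix.map_apply, Matrix.of_apply, Fin.cons_zero, Fin.cons_succ]
    exact (congrFun (single_map f _ _) j).trans (by simp)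
  · simp only [Pm, Matrix.map_apply, Matrix.of_apply, Fin.cons_zero, Fin.cons_succ]
    exact (congrFun (single_map f _ _) j).trans (by simp)

theorem Pm_mulVec {R : Type*} [CommRing R] (N : ℕ) (t : R) (y : Fin (N + 1) → R) :
    (Pm N t).mulVec y = Fin.cons (y 0) (Fin.cons (t * y 0) fun j => y j.succ) := by
  ext i
  refine Fin.cases ?_ (fun i => Fin.cases ?_ (fun i => ?_) i) i <;>
  simp [Pm, Matrix.mulVec]

theorem generic_cons {K M : Type*} [Field K] [Field M] {N : ℕ} (f : RatFunc K →+* M) (x : Fin N → M)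
    (h : Function.Injective (MvPolynomial.eval₂Hom f x)) :
    Function.Injective (MvPolynomial.eval₂Hom (f.comp (rc K))
      (Fin.cons (f RatFunc.X) x : Fin (N + 1) → M)) := by
  have : MvPolynomial.eval₂Hom (f.comp (rc K)) (Fin.cons (f RatFunc.X) x : Fin (N + 1) → M)
      = ((MvPolynomial.eval₂Hom f x).comp
        (MvPolynomial.map (algebraMap K[X] (RatFunc K)))).comp
        (((MvPolynomial.optionEquivRight K (Fin N)).toRingEquiv.toRingHom).comp
        (MvPolynomial.renameEquiv K (finSuccEquiv N)).toRingEquiv.toRingHom) := by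
    apply MvPolynomial.ringHom_ext
    · intro r
      simp [MvPolynomial.optionEquivRight_C]
    · intro i
      refine Fin.cases ?_ (fun i => ?_) i
      · simp [MvPolynomial.optionEquivRight_X_none]
      · simp [MvPolynomial.optionEquivRight_X_some]
  rw [this]
  simp only [RingHom.coe_comp]
  refine (h.comp (MvPolynomial.map_injective _ alg_inj)).comp ?_
  exact (MvPolynomial.optionEquivRight K (Fin N)).injective.comp
    (MvPolynomial.renameEquiv K (finSuccEquiv N)).injective

theorem S_lemma : ∀ (N : ℕ) (K : Type v) [Field K] (n : ℕ) (c : Matrix (Fin n) (Fin n) K)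
    (ψ : Matrix (Fin (N + 1)) (Fin (N + 1)) K), An (Qc c) →
    (∀ (M : Type v) [Field M] (f : K →+* M) (x : Fin N → M), An (Qc (c.map f)) →
      Function.Injective (MvPolynomial.eval₂Hom f x) →
      ∃ w, Qc (c.map f) w = Qc (ψ.map f) (Fin.cons 1 x : Fin (N + 1) → M)) →
    ∃ σ : Fin (N + 1) → Fin n → K, (∀ i, Qc c (σ i) = Qc ψ (Pi.single i 1)) ∧
      ∀ i j, polar (Qc c) (σ i) (σ j) = polar (Qc ψ) (Pi.single i 1) (Pi.single j 1) := by
  intro N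
  induction N with
  | zero =>
    intro K _ n c ψ hc H
    obtain ⟨w, hw⟩ := H K (RingHom.id K) (fun i => i.elim0) (by simpa using hc) (by
      rw [injective_iff_map_eq_zero]
      intro p hp
      rw [MvPolynomial.eq_C_of_isEmpty p] at hp ⊢
      simpa using hp)
    have hz : ∀ i : Fin (0 + 1), i = 0 := fun i => Fin.ext (by have := i.2; simp)
    have h0 : (Fin.cons 1 (fun i => i.elim0) : Fin (0 + 1) → K) = Pi.single 0 1 := by
      ext i; rw [hz i]; simp
    have hid : ∀ (k : ℕ) (d : Matrix (Fin k) (Fin k) K), d.map (RingHom.id K) = d := by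
      intro k d; ext; simp
    rw [hid, hid, h0] at hw
    refine ⟨fun _ => w, fun i => ?_, fun i j => ?_⟩
    · rw [hz i]; exact hw
    · rw [hz i, hz j, polar_self, polar_self, hw]
  | succ N ih =>
    intro K _ n c ψ hc H
    have hcR := An_ratFunc hc
    obtain ⟨σ, hσ1, hσ2⟩ := ih (RatFunc K) n (c.map (rc K))
      ((Pm N (RatFunc.X : RatFunc K)).transpose * ψ.map (rc K) * Pm N (RatFunc.X : RatFunc K)) hcR (by
        intro M _ f x hM hx
        obtain ⟨w, hw⟩ := H M (f.comp (rc K)) (Fin.cons (f RatFunc.X) x)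
          (by rw [Matrix.map_map] at hM; exact hM) (generic_cons f x hx)
        refine ⟨w, ?_⟩
        rw [Matrix.map_map]
        refine hw.trans ?_
        rw [Matrix.map_mul, Matrix.map_mul, Matrix.transpose_map, Pm_map, Qc_transform, Pm_mulVec,
          Matrix.map_map]
        simp)
    let e : Fin (N + 1 + 1) → Fin (N + 1 + 1) → K := fun i => Pi.single i 1
    let eR : Fin (N + 1 + 1) → Fin (N + 1 + 1) → RatFunc K := fun i => fun k => rc K (e i k)
    have heR : ∀ i, eR i = Pi.single i 1 := by
      intro i
      exact (single_map (rc K) i 1).trans (by simp)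
    set ψR := Qc (ψ.map (rc K)) with hψR
    have hA0 : (Pm N (RatFunc.X : RatFunc K)).mulVec (Pi.single 0 1)
        = eR 0 + (RatFunc.X : RatFunc K) • eR 1 := by
      rw [Pm_mulVec, heR, heR]
      ext i
      refine Fin.cases ?_ (fun i => Fin.cases ?_ (fun i => ?_) i) i
      · simp
      · simp
      · simp [Pi.single_apply, Fin.ext_iff]
    have hAs : ∀ j : Fin N, (Pm N (RatFunc.X : RatFunc K)).mulVec (Pi.single j.succ 1)
        = eR j.succ.succ := by
      intro j
      rw [Pm_mulVec, heR]
      ext i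
      refine Fin.cases ?_ (fun i => Fin.cases ?_ (fun i => ?_) i) i
      · simp [Pi.single_apply, Fin.ext_iff]
      · simp [Pi.single_apply, Fin.ext_iff]
      · simp [Pi.single_apply, Fin.ext_iff]
    have hpol : ∀ x y, polar (Qc ((Pm N (RatFunc.X : RatFunc K)).transpose * ψ.map (rc K) * Pm N (RatFunc.X : RatFunc K))) x y
        = polar ψR ((Pm N RatFunc.X).mulVec x) ((Pm N RatFunc.X).mulVec y) := by
      intro x y
      simp only [polar, Qc_transform, Matrix.mulVec_add]
      rfl
    have hψe : ∀ i, ψR (eR i) = rc K (Qc ψ (e i)) := fun i => Qc_map _ _ _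
    have hψp : ∀ i j, polar ψR (eR i) (eR j) = rc K (polar (Qc ψ) (e i) (e j)) :=
      fun i j => polar_map _ _ _ _
    have h1 : ∀ j : Fin N, Qc (c.map (rc K)) (σ j.succ) = rc K (Qc ψ (e j.succ.succ)) := by
      intro j; rw [hσ1, Qc_transform, hAs, ← hψe]
    have h2 : ∀ i j : Fin N, polar (Qc (c.map (rc K))) (σ i.succ) (σ j.succ)
        = rc K (polar (Qc ψ) (e i.succ.succ) (e j.succ.succ)) := by
      intro i j; rw [hσ2, hpol, hAs, hAs, ← hψp]
    have h3 : Qc (c.map (rc K)) (σ 0) = rc K (Qc ψ (e 0)) + RatFunc.X * RatFunc.X *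
        rc K (Qc ψ (e 1)) + RatFunc.X * rc K (polar (Qc ψ) (e 0) (e 1)) := by
      rw [hσ1, Qc_transform, hA0, ← hψR, QuadraticMap.map_add ψR, QuadraticMap.map_smul, hψe, hψe,
        polar_smul_right, hψp]
      simp only [smul_eq_mul]
    have h4 : ∀ j : Fin N, polar (Qc (c.map (rc K))) (σ 0) (σ j.succ)
        = rc K (polar (Qc ψ) (e 0) (e j.succ.succ))
          + RatFunc.X * rc K (polar (Qc ψ) (e 1) (e j.succ.succ)) := by
      intro j
      rw [hσ2, hpol, hA0, hAs, polar_add_left, polar_smul_left, hψp, hψp]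
      simp only [smul_eq_mul]
    obtain ⟨τ, hτ1, hτ2⟩ := specialize hc (fun j => σ (Fin.succ j)) _ _ h1 h2
    obtain ⟨g, hg1, hg2⟩ := iso_ext hcR N (fun j => σ (Fin.succ j)) (fun j k => rc K (τ j k))
      (fun i => by rw [h1, Qc_map, hτ1]) (fun i j => by rw [h2, polar_map, hτ2])
    obtain ⟨d, q, hd, hq⟩ := clear_denom (fun _ : Fin 1 => g (σ 0))
    have hX : (RatFunc.X : RatFunc K) = algebraMap K[X] (RatFunc K) X := by simp
    have hrc : ∀ a, rc K a = algebraMap K[X] (RatFunc K) (C a) := fun a => by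
      rw [rc_eq]; rfl
    obtain ⟨p, hp1, hp2⟩ := cassels_pfister hc τ
      (C (Qc ψ (e 0)) + X * X * C (Qc ψ (e 1)) + X * C (polar (Qc ψ) (e 0) (e 1)))
      (fun j => C (polar (Qc ψ) (e 0) (e j.succ.succ))
        + X * C (polar (Qc ψ) (e 1) (e j.succ.succ)))
      d.natDegree d (q 0) le_rfl hd (by
        apply alg_inj
        rw [← Qc_map, ← hq 0, ← map_rc, QuadraticMap.map_smul, hg1, h3, hX]
        simp only [hrc, smul_eq_mul, map_mul, _root_.map_add, map_pow]
        ring) (by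
        intro i
        apply alg_inj
        rw [← polar_map, ← hq 0, ← map_rc, polar_smul_left]
        have : (fun j => algebraMap K[X] (RatFunc K) (C (τ i j))) = g (σ i.succ) := by
          rw [hg2]; ext j; rw [hrc]
        rw [this, polar_equiv g hg1, h4, hX]
        simp only [hrc, smul_eq_mul, map_mul, _root_.map_add]
        ring)
    have hdeg : ∀ i, (p i).natDegree ≤ 1 := by
      intro i
      refine deg_bound hc p 1 ?_ i
      rw [hp1]
      compute_degree
    let p0 : Fin n → K := fun i => (p i).coeff 0
    let p1 : Fin n → K := fun i => (p i).coeff 1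
    have hp : p = (fun i => C (p0 i)) + (X : K[X]) • (fun i => C (p1 i)) := by
      ext1 i
      simp only [Pi.add_apply, Pi.smul_apply, smul_eq_mul, p0, p1]
      conv_lhs => rw [eq_X_add_C_of_natDegree_le_one (hdeg i)]
      ring
    rw [hp, QuadraticMap.map_add (Qc (c.map C)), QuadraticMap.map_smul, polar_smul_right, Qc_map,
      Qc_map, polar_map] at hp1
    simp only [smul_eq_mul] at hp1
    have k0 : Qc c p0 = Qc ψ (e 0) := by
      have := congrArg (fun r => coeff r 0) hp1
      simpa [mul_assoc, mul_coeff_zero] using this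
    have k1 : polar (Qc c) p0 p1 = polar (Qc ψ) (e 0) (e 1) := by
      have := congrArg (fun r => coeff r 1) hp1
      simpa [mul_assoc, coeff_X_mul, coeff_C] using this
    have k2 : Qc c p1 = Qc ψ (e 1) := by
      have := congrArg (fun r => coeff r 2) hp1
      simpa [mul_assoc, coeff_X_mul, coeff_C] using this
    have k3 : ∀ j : Fin N, polar (Qc c) p0 (τ j) = polar (Qc ψ) (e 0) (e j.succ.succ) ∧
        polar (Qc c) p1 (τ j) = polar (Qc ψ) (e 1) (e j.succ.succ) := by
      intro j
      have h := hp2 j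
      rw [hp, polar_add_left, polar_smul_left, polar_map, polar_map] at h
      constructor
      · have := congrArg (fun r => coeff r 0) h
        simpa [mul_coeff_zero] using this
      · have := congrArg (fun r => coeff r 1) h
        simpa [coeff_X_mul, coeff_C] using this
    refine ⟨Fin.cons p0 (Fin.cons p1 τ), fun i => ?_, fun i j => ?_⟩
    · refine Fin.cases ?_ (fun i => Fin.cases ?_ (fun i => ?_) i) i
      · simpa using k0
      · simpa using k2
      · simpa using hτ1 i
    · revert i j
      suffices hlt : ∀ i j : Fin (N + 1 + 1), i < j → polar (Qc c)
          ((Fin.cons p0 (Fin.cons p1 τ) : Fin (N + 1 + 1) → Fin n → K) i)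
          ((Fin.cons p0 (Fin.cons p1 τ) : Fin (N + 1 + 1) → Fin n → K) j)
          = polar (Qc ψ) (e i) (e j) by
        intro i j
        rcases lt_trichotomy i j with h | h | h
        · exact hlt i j h
        · subst h
          rw [polar_self, polar_self]
          congr 1
          refine Fin.cases ?_ (fun i => Fin.cases ?_ (fun i => ?_) i) i
          · simpa using k0
          · simpa using k2
          · simpa using hτ1 i
        · rw [polar_comm, polar_comm (Qc ψ)]
          exact hlt j i h
      intro i j
      refine Fin.cases ?_ (fun i => Fin.cases ?_ (fun i => ?_) i) i
      · refine Fin.cases ?_ (fun j => Fin.cases ?_ (fun j => ?_) j) j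
        · simp
        · intro _; simpa using k1
        · intro _; simpa using (k3 j).1
      · refine Fin.cases ?_ (fun j => Fin.cases ?_ (fun j => ?_) j) j
        · simp
        · simp
        · intro _; simpa using (k3 j).2
      · refine Fin.cases ?_ (fun j => Fin.cases ?_ (fun j => ?_) j) j
        · simp
        · intro h; simp [Fin.lt_def] at h
        · intro _; simpa using hτ2 i j

end slemma
end WK

namespace WK
open QuadraticMap Module

section generic
variable {R S : Type*} [CommRing R] [CommRing S] {N : ℕ}

/-- The coordinates `i0, i1` split off a binary form `[1, *]` up to the rest. -/
def PS (c : Matrix (Fin N) (Fin N) R) (i0 i1 : Fin N) : Prop :=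
  i0 ≠ i1 ∧ c i0 i0 = 1 ∧ c i0 i1 = 1 ∧ (∀ j, j ≠ i0 → j ≠ i1 → c i0 j = 0) ∧
    ∀ j, j ≠ i0 → c j i0 = 0

theorem PS.map {c : Matrix (Fin N) (Fin N) R} {i0 i1 : Fin N} (h : PS c i0 i1) (f : R →+* S) :
    PS (c.map f) i0 i1 := by
  obtain ⟨h1, h2, h3, h4, h5⟩ := h
  refine ⟨h1, by simp [h2], by simp [h3], fun j a b => by simp [h4 j a b], fun j a => by
    simp [h5 j a]⟩

theorem PS.eval {c : Matrix (Fin N) (Fin N) R} {i0 i1 : Fin N} (h : PS c i0 i1) (x : Fin N → R) :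
    Qc c x = x i0 * x i0 + x i0 * x i1 + Qc c (Function.update x i0 0) := by
  obtain ⟨h1, h2, h3, h4, h5⟩ := h
  have hx : x = x i0 • (Pi.single i0 1 : Fin N → R) + Function.update x i0 0 := by
    ext j
    by_cases hj : j = i0
    · subst hj; simp
    · simp [hj]
  conv_lhs => rw [hx]
  rw [QuadraticMap.map_add (Qc c), QuadraticMap.map_smul, polar_smul_left, polar_comm, polar_Qc,
    single_one_dotProduct]
  have e1 : Qc c (Pi.single i0 1) = 1 := by
    rw [Qc_apply, Finset.sum_eq_single i0, Finset.sum_eq_single i0]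
    · simp [h2]
    · intro j _ hj; simp [hj]
    · simp
    · intro j _ hj; simp [hj]
    · simp
  have e2 : (c + c.transpose).mulVec (Function.update x i0 0) i0 = x i1 := by
    rw [Matrix.mulVec, dotProduct, Finset.sum_eq_single i1]
    · simp [h3, h5 i1 h1.symm, Function.update_of_ne h1.symm]
    · intro j _ hj
      by_cases hj0 : j = i0
      · subst hj0; simp
      · simp [h4 j hj0 hj, h5 j hj0]
    · simp
  rw [e1, e2]
  simp only [smul_eq_mul]
  ring

theorem generic_point {K M : Type*} [Field K] [Field M] [CharP K 2] (q : QF K)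
    [IsDomain (QF.CoordRing q)] {i0 i1 : Fin q.dim} (hq : PS q.c i0 i1)
    (f : K →+* M) (y : Fin q.dim → M) (hy : Function.Injective (MvPolynomial.eval₂Hom f y))
    (z : M) (hz : y i1 * y i1 * (z * z + z) = Qc (q.c.map f) (Function.update y i0 0)) :
    ∃ g : QF.FunctionField q →+* M, ∀ k, g (algebraMap (QF.CoordRing q) (QF.FunctionField q)
      (algebraMap K (QF.CoordRing q) k)) = f k := by
  have : CharP M 2 := charP_of_injective_ringHom f.injective 2
  have two : (2 : M) = 0 := CharTwo.two_eq_zero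
  let A : Subalgebra K (MvPolynomial (Fin q.dim) K) := MvPolynomial.supported K {j | j ≠ i0}
  let I : Ideal (MvPolynomial (Fin q.dim) K) := Ideal.span {q.toPoly}
  have hy1 : y i1 ≠ 0 := by
    intro h
    have h1 : MvPolynomial.eval₂Hom f y (MvPolynomial.X i1) = MvPolynomial.eval₂Hom f y 0 := by
      simp [h]
    exact MvPolynomial.X_ne_zero i1 (hy h1)
  have hpoly : q.toPoly = Qc (q.c.map MvPolynomial.C) MvPolynomial.X := by
    rw [Qc_apply, QF.toPoly]
    refine Finset.sum_congr rfl fun i _ => Finset.sum_congr rfl fun j _ => ?_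
    rw [Matrix.map_apply]; ring
  have hevq : ∀ w : Fin q.dim → M, MvPolynomial.eval₂Hom f w q.toPoly = Qc (q.c.map f) w := by
    intro w
    rw [hpoly, ← Qc_map, Matrix.map_map]
    congr 1
    · congr 2
      ext i j; simp
    · ext i; simp
  -- evaluation of polynomials not involving `i0`
  have hA : ∀ (w : M) (G : MvPolynomial (Fin q.dim) K), G ∈ A →
      MvPolynomial.eval₂Hom f (Function.update y i0 w) G = MvPolynomial.eval₂Hom f y G := by
    intro w G hG
    refine MvPolynomial.eval₂Hom_congr' rfl ?_ rfl
    intro i hi _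
    have : i ≠ i0 := (MvPolynomial.mem_supported.1 hG) (by simpa using hi)
    rw [Function.update_of_ne this]
  have hred : ∀ G : MvPolynomial (Fin q.dim) K, ∃ a ∈ A, ∃ b ∈ A,
      G - (a * MvPolynomial.X i0 + b) ∈ I := by
    have hXA : ∀ i, i ≠ i0 → (MvPolynomial.X i : MvPolynomial (Fin q.dim) K) ∈ A := fun i hi =>
      MvPolynomial.X_mem_supported.2 hi
    let ρ : MvPolynomial (Fin q.dim) K :=
      Qc (q.c.map MvPolynomial.C) (Function.update MvPolynomial.X i0 0)
    have hρ : ρ ∈ A := by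
      have hu : ∀ i, Function.update (MvPolynomial.X : _ → MvPolynomial (Fin q.dim) K) i0 0 i ∈ A := by
        intro i
        by_cases hi : i = i0
        · subst hi; simp [A.zero_mem]
        · rw [Function.update_of_ne hi]; exact hXA i hi
      simp only [ρ, Qc_apply]
      refine A.sum_mem fun i _ => A.sum_mem fun j _ => A.mul_mem (A.mul_mem ?_ (hu i)) (hu j)
      exact A.algebraMap_mem _
    have hX0 : q.toPoly = MvPolynomial.X i0 * MvPolynomial.X i0
        + MvPolynomial.X i0 * MvPolynomial.X i1 + ρ := by
      rw [hpoly]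
      exact (hq.map MvPolynomial.C).eval _
    intro G
    induction G using MvPolynomial.induction_on with
    | C k =>
      refine ⟨0, A.zero_mem, MvPolynomial.C k, A.algebraMap_mem k, ?_⟩
      simp
    | add G H hG hH =>
      obtain ⟨a, ha, b, hb, h⟩ := hG
      obtain ⟨a', ha', b', hb', h'⟩ := hH
      refine ⟨a + a', A.add_mem ha ha', b + b', A.add_mem hb hb', ?_⟩
      have := I.add_mem h h'
      convert this using 1
      ring
    | mul_X G i hG =>
      obtain ⟨a, ha, b, hb, h⟩ := hG
      by_cases hi : i = i0
      · subst hi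
        refine ⟨b - a * MvPolynomial.X i1, A.sub_mem hb (A.mul_mem ha (hXA i1 hq.1.symm)),
          - (a * ρ), A.neg_mem (A.mul_mem ha hρ), ?_⟩
        have := I.add_mem (I.mul_mem_right (MvPolynomial.X i) h)
          (I.mul_mem_left a (Ideal.subset_span (Set.mem_singleton q.toPoly)))
        convert this using 1
        rw [hX0]
        ring
      · refine ⟨a * MvPolynomial.X i, A.mul_mem ha (hXA i hi), b * MvPolynomial.X i,
          A.mul_mem hb (hXA i hi), ?_⟩
        have := I.mul_mem_right (MvPolynomial.X i) h
        convert this using 1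
        ring
  have hker : ∀ w : M, y i1 * y i1 * (w * w + w) = Qc (q.c.map f) (Function.update y i0 0) →
      ∀ G ∈ I, MvPolynomial.eval₂Hom f (Function.update y i0 (y i1 * w)) G = 0 := by
    intro w hw G hG
    obtain ⟨H, rfl⟩ := Ideal.mem_span_singleton'.1 hG
    rw [map_mul, hevq, (hq.map f).eval]
    simp only [Function.update_self, Function.update_idem, Function.update_of_ne hq.1.symm]
    rw [← hw]
    linear_combination (MvPolynomial.eval₂Hom f (Function.update y i0 (y i1 * w)) H
      * (y i1 * y i1 * (w * w + w))) * two
  have hz' : y i1 * y i1 * ((z + 1) * (z + 1) + (z + 1))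
      = Qc (q.c.map f) (Function.update y i0 0) := by
    rw [← hz]
    linear_combination (y i1 * y i1 * (z + 1)) * two
  have hker' : ∀ w : M, y i1 * y i1 * (w * w + w) = Qc (q.c.map f) (Function.update y i0 0) →
      ∀ G ∈ I.radical, MvPolynomial.eval₂Hom f (Function.update y i0 (y i1 * w)) G = 0 := by
    intro w hw G hG
    obtain ⟨k, hk⟩ := hG
    have := hker w hw _ hk
    rw [map_pow] at this
    exact IsReduced.eq_zero _ ⟨k, this⟩
  let ev : ∀ w : M, y i1 * y i1 * (w * w + w) = Qc (q.c.map f) (Function.update y i0 0) →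
      (QF.CoordRing q →+* M) := fun w hw =>
    Ideal.Quotient.lift I.radical (MvPolynomial.eval₂Hom f (Function.update y i0 (y i1 * w)))
      (hker' w hw)
  have hjoint : ∀ r : QF.CoordRing q, ev z hz r = 0 → ev (z + 1) hz' r = 0 → r = 0 := by
    intro r h1 h2
    obtain ⟨G, rfl⟩ := Ideal.Quotient.mk_surjective r
    have e1 : MvPolynomial.eval₂Hom f (Function.update y i0 (y i1 * z)) G = 0 := h1
    have e2 : MvPolynomial.eval₂Hom f (Function.update y i0 (y i1 * (z + 1))) G = 0 := h2
    obtain ⟨a, ha, b, hb, h⟩ := hred G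
    have k1 := hker z hz _ h
    have k2 := hker (z + 1) hz' _ h
    rw [map_sub, _root_.map_add, map_mul, hA _ a ha, hA _ b hb, MvPolynomial.eval₂Hom_X',
      Function.update_self, e1] at k1
    rw [map_sub, _root_.map_add, map_mul, hA _ a ha, hA _ b hb, MvPolynomial.eval₂Hom_X',
      Function.update_self, e2] at k2
    have ka : MvPolynomial.eval₂Hom f y a = 0 := by
      have : MvPolynomial.eval₂Hom f y a * y i1 = 0 := by linear_combination k1 - k2
      exact (mul_eq_zero.1 this).resolve_right hy1
    have kb : MvPolynomial.eval₂Hom f y b = 0 := by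
      rw [ka] at k1
      linear_combination -k1
    have ha0 : a = 0 := hy (by rw [ka, map_zero])
    have hb0 : b = 0 := hy (by rw [kb, map_zero])
    rw [ha0, hb0] at h
    refine Ideal.Quotient.eq_zero_iff_mem.2 (Ideal.le_radical ?_)
    simpa using h
  have key : Function.Injective (ev z hz) ∨ Function.Injective (ev (z + 1) hz') := by
    by_contra hcon
    push Not at hcon
    obtain ⟨c1, c2⟩ := hcon
    rw [injective_iff_map_eq_zero] at c1 c2
    push Not at c1 c2
    obtain ⟨r, hr, hr0⟩ := c1
    obtain ⟨s, hs, hs0⟩ := c2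
    exact mul_ne_zero hr0 hs0 (hjoint (r * s) (by rw [map_mul, hr, zero_mul])
      (by rw [map_mul, hs, mul_zero]))
  have fin : ∀ w hw, Function.Injective (ev w hw) → ∃ g : QF.FunctionField q →+* M,
      ∀ k, g (algebraMap (QF.CoordRing q) (QF.FunctionField q)
      (algebraMap K (QF.CoordRing q) k)) = f k := by
    intro w hw hinj
    refine ⟨IsFractionRing.lift hinj, fun k => ?_⟩
    rw [IsFractionRing.lift_algebraMap]
    have : algebraMap K (QF.CoordRing q) k = Ideal.Quotient.mk _ (MvPolynomial.C k) := rfl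
    rw [this]
    simp only [ev]
    rw [Ideal.Quotient.lift_mk]
    simp
  rcases key with h | h
  · exact fin z hz h
  · exact fin (z + 1) hz' h

end generic
end WK

namespace WK
open QuadraticMap Module

section star
universe v
open Polynomial

theorem Lagr.isotropic {E V : Type*} [Field E] [AddCommGroup V] [Module E V]
    {Q : QuadraticForm E V} (h : Lagr Q) (ha : An Q) : finrank E V = 0 := by
  obtain ⟨I, hI, hd⟩ := h
  have : I = ⊥ := by
    rw [eq_bot_iff]
    intro x hx
    exact ha x (hI x hx)
  rw [this, finrank_bot] at hd
  omega

/-- Forms hyperbolic over a separable quadratic extension. -/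
theorem quad_ext {E M : Type*} [Field E] [Field M] [Algebra E M] [CharP E 2] {n : ℕ}
    (c : Matrix (Fin n) (Fin n) E) (hc : An (Qc c)) (h2 : finrank E M = 2) (d : E) (z : M)
    (hz : z * z + z = algebraMap E M d) (hzE : ∀ a : E, algebraMap E M a ≠ z)
    (h : Lagr (Qc (c.map (algebraMap E M)))) (v : Fin n → E) :
    ∃ u, Qc c u = d * Qc c v ∧ polar (Qc c) u v = Qc c v := by
  have : CharP M 2 := charP_of_injective_ringHom (algebraMap E M).injective 2
  have two : (2 : M) = 0 := CharTwo.two_eq_zero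
  have hfin : FiniteDimensional E M := FiniteDimensional.of_finrank_pos (by omega)
  have hind : ∀ s t : E, algebraMap E M s + z * algebraMap E M t = 0 → s = 0 ∧ t = 0 := by
    intro s t hst
    by_cases ht : t = 0
    · subst ht
      simpa using hst
    · exfalso
      refine hzE (- (s / t)) ?_
      have ht' : algebraMap E M t ≠ 0 := by simpa using ht
      rw [map_neg, map_div₀]
      field_simp
      linear_combination -hst
  have hli : LinearIndependent E ![(1 : M), z] := by
    rw [LinearIndependent.pair_iff]
    intro s t hst
    exact hind s t (by rw [← hst]; simp [Algebra.smul_def, mul_comm])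
  let b : Basis (Fin 2) E M := basisOfLinearIndependentOfCardEqFinrank hli (by simp [h2])
  have hb0 : b 0 = 1 := by simp [b]
  have hb1 : b 1 = z := by simp [b]
  have hrep : ∀ m : M, m = algebraMap E M (b.coord 0 m) + z * algebraMap E M (b.coord 1 m) := by
    intro m
    conv_lhs => rw [← b.sum_repr m]
    rw [Fin.sum_univ_two, hb0, hb1]
    simp [Algebra.smul_def, mul_comm]
  obtain ⟨I, hI, hd⟩ := h
  rw [finrank_fin_fun] at hd
  let δ : (Fin n → M) →ₗ[E] (Fin n → E) := LinearMap.compLeft (b.coord 1) (Fin n)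
  let δI : I →ₗ[E] (Fin n → E) := δ ∘ₗ (I.subtype.restrictScalars E)
  have hdec : ∀ m : Fin n → M, m = (fun i => algebraMap E M (b.coord 0 (m i)))
      + z • (fun i => algebraMap E M (δ m i)) := by
    intro m; ext i
    exact hrep (m i)
  have hδ : Function.Injective δI := by
    rw [injective_iff_map_eq_zero]
    rintro ⟨m, hm⟩ h0
    have h0' : δ m = 0 := h0
    have h1 := hI m hm
    have h2 := hdec m
    rw [h0'] at h2
    have h3 : m = fun i => algebraMap E M (b.coord 0 (m i)) := by
      conv_lhs => rw [h2]
      ext i; simp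
    rw [h3, Qc_map] at h1
    have h4 := hc _ ((map_eq_zero _).1 h1)
    have h5 : m = 0 := by
      rw [h3]
      ext i
      have := congrFun h4 i
      simp [this]
    exact Subtype.ext h5
  have hfr : finrank E I = finrank E (Fin n → E) := by
    apply le_antisymm (LinearMap.finrank_le_finrank_of_injective hδ)
    rw [finrank_fin_fun, ← finrank_mul_finrank E M I, h2]
    exact hd
  have : FiniteDimensional E I := FiniteDimensional.of_injective δI hδ
  have hsurj : Function.Surjective δI :=
    (LinearMap.injective_iff_surjective_of_finrank_eq_finrank hfr).1 hδ
  obtain ⟨⟨m, hm⟩, hmv⟩ := hsurj v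
  have hmv' : δ m = v := hmv
  have h1 := hI m hm
  have h2 := hdec m
  rw [hmv'] at h2
  rw [h2, QuadraticMap.map_add (Qc _), QuadraticMap.map_smul, polar_smul_right, Qc_map, Qc_map,
    polar_map] at h1
  simp only [smul_eq_mul] at h1
  set u : Fin n → E := fun i => b.coord 0 (m i) with hu
  have h3 := hind (Qc c u + d * Qc c v) (Qc c v + polar (Qc c) u v) (by
    simp only [_root_.map_add, map_mul, ← hz]
    linear_combination h1 + (z * algebraMap E M (Qc c v)) * two)
  have twoE : (2 : E) = 0 := CharTwo.two_eq_zero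
  exact ⟨u, by linear_combination h3.1 - d * Qc c v * twoE,
    by linear_combination h3.2 - Qc c v * twoE⟩

theorem star_rep {K : Type*} {M : Type*} [Field K] [Field M] [CharP K 2] (q : QF K)
    [IsDomain (QF.CoordRing q)] {i0 i1 : Fin q.dim} (hq : PS q.c i0 i1)
    (f : K →+* M) (y : Fin q.dim → M) (hy : Function.Injective (MvPolynomial.eval₂Hom f y))
    {n : ℕ} (hn : n ≠ 0) (c : Matrix (Fin n) (Fin n) K) (hc : An (Qc (c.map f)))
    (hL : Lagr (Qc (c.map ((algebraMap (QF.CoordRing q) (QF.FunctionField q)).comp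
      (algebraMap K (QF.CoordRing q)))))) (v : Fin n → M) :
    ∃ w, Qc (c.map f) w = Qc (c.map f) v * Qc (q.c.map f) y := by
  have : CharP M 2 := charP_of_injective_ringHom f.injective 2
  have two : (2 : M) = 0 := CharTwo.two_eq_zero
  have hy1 : y i1 ≠ 0 := by
    intro h
    have h1 : MvPolynomial.eval₂Hom f y (MvPolynomial.X i1) = MvPolynomial.eval₂Hom f y 0 := by
      simp [h]
    exact MvPolynomial.X_ne_zero i1 (hy h1)
  obtain ⟨d, hd⟩ : ∃ d, y i1 * y i1 * d = Qc (q.c.map f) (Function.update y i0 0) :=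
    ⟨Qc (q.c.map f) (Function.update y i0 0) / (y i1 * y i1), by field_simp⟩
  by_cases hz : ∃ z : M, z * z + z = d
  · obtain ⟨z, hz⟩ := hz
    obtain ⟨g, hg⟩ := generic_point q hq f y hy z (by rw [hz, hd])
    have h1 := hL.map g
    rw [Matrix.map_map] at h1
    have h2 : (c.map (g ∘ ((algebraMap (QF.CoordRing q) (QF.FunctionField q)).comp
      (algebraMap K (QF.CoordRing q))))) = c.map f := by
      ext i j
      exact hg _
    rw [h2] at h1
    have := h1.isotropic hc
    rw [finrank_fin_fun] at this
    exact absurd this hn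
  · push Not at hz
    let p : M[X] := X ^ 2 + X + C d
    have hpd : p.natDegree = 2 := by simp only [p]; compute_degree!
    have hpm : p.Monic := by simp only [p]; monicity!
    have hirr : Irreducible p := by
      refine Polynomial.irreducible_of_degree_le_three_of_not_isRoot (by simp [hpd]) ?_
      intro x hx
      refine hz x ?_
      simp only [p, IsRoot, eval_add, eval_pow, eval_X, eval_C] at hx
      linear_combination hx - d * two
    have : Fact (Irreducible p) := ⟨hirr⟩
    let z : AdjoinRoot p := AdjoinRoot.root p
    have : CharP (AdjoinRoot p) 2 :=
      charP_of_injective_ringHom (algebraMap M (AdjoinRoot p)).injective 2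
    have two' : (2 : AdjoinRoot p) = 0 := CharTwo.two_eq_zero
    have hz1 : z * z + z = algebraMap M (AdjoinRoot p) d := by
      have h0 := AdjoinRoot.eval₂_root p
      simp only [p, eval₂_add, eval₂_pow, eval₂_X, eval₂_C] at h0
      have : algebraMap M (AdjoinRoot p) d = AdjoinRoot.of p d := rfl
      rw [this]
      linear_combination h0 - AdjoinRoot.of p d * two'
    have hfr : finrank M (AdjoinRoot p) = 2 := by
      rw [(AdjoinRoot.powerBasis hirr.ne_zero).finrank, AdjoinRoot.powerBasis_dim, hpd]
    have hyy : Function.Injective (MvPolynomial.eval₂Hom ((algebraMap M (AdjoinRoot p)).comp f)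
        (fun i => algebraMap M (AdjoinRoot p) (y i))) := by
      have : MvPolynomial.eval₂Hom ((algebraMap M (AdjoinRoot p)).comp f)
        (fun i => algebraMap M (AdjoinRoot p) (y i))
        = (algebraMap M (AdjoinRoot p)).comp (MvPolynomial.eval₂Hom f y) := by
        apply MvPolynomial.ringHom_ext <;> simp
      rw [this]
      exact (algebraMap M (AdjoinRoot p)).injective.comp hy
    obtain ⟨g, hg⟩ := generic_point q hq ((algebraMap M (AdjoinRoot p)).comp f)
      (fun i => algebraMap M (AdjoinRoot p) (y i)) hyy z (by
        have e1 : Function.update (fun i => algebraMap M (AdjoinRoot p) (y i)) i0 0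
            = fun i => algebraMap M (AdjoinRoot p) (Function.update y i0 0 i) := by
          ext i
          by_cases hi : i = i0
          · subst hi; simp
          · simp [hi]
        have e2 : q.c.map ((algebraMap M (AdjoinRoot p)).comp f)
            = (q.c.map f).map (algebraMap M (AdjoinRoot p)) := by
          rw [Matrix.map_map]; rfl
        rw [e1, e2, Qc_map, ← hd, hz1]
        simp)
    have h1 := hL.map g
    rw [Matrix.map_map] at h1
    have h2 : (c.map (g ∘ ((algebraMap (QF.CoordRing q) (QF.FunctionField q)).comp
      (algebraMap K (QF.CoordRing q))))) = (c.map f).map (algebraMap M (AdjoinRoot p)) := by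
      ext i j
      exact hg _
    rw [h2] at h1
    obtain ⟨u, hu1, hu2⟩ := quad_ext (c.map f) hc hfr d z hz1 (by
      intro a ha
      refine hz a ?_
      apply (algebraMap M (AdjoinRoot p)).injective
      rw [_root_.map_add, map_mul, ha, hz1]) h1 v
    refine ⟨y i0 • v + y i1 • u, ?_⟩
    rw [QuadraticMap.map_add (Qc _), QuadraticMap.map_smul, QuadraticMap.map_smul, polar_smul_left,
      polar_smul_right, polar_comm, hu1, hu2, (hq.map f).eval, ← hd]
    simp only [smul_eq_mul]
    ring

theorem star {K : Type v} [Field K] [CharP K 2] (q : QF K)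
    [IsDomain (QF.CoordRing q)] {i0 i1 : Fin q.dim} (hq : PS q.c i0 i1)
    {n : ℕ} (hn : n ≠ 0) (c : Matrix (Fin n) (Fin n) K) (hc : An (Qc c))
    (hL : Lagr (Qc (c.map ((algebraMap (QF.CoordRing q) (QF.FunctionField q)).comp
      (algebraMap K (QF.CoordRing q)))))) (v : Fin n → K) :
    ∃ σ : (Fin q.dim → K) →ₗ[K] (Fin n → K), ∀ y, Qc c (σ y) = Qc c v * Qc q.c y := by
  let P : ∀ (R : Type v) [CommRing R], Matrix (Fin q.dim) (Fin (q.dim + 1)) R :=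
    fun R _ => Matrix.of fun i => Pi.single i.succ 1
  have hP : ∀ (R : Type v) [CommRing R] (y : Fin (q.dim + 1) → R),
      (P R).mulVec y = fun i => y i.succ := by
    intro R _ y; ext i
    simp [P, Matrix.mulVec]
  have hPm : ∀ (R : Type v) [CommRing R] (f : K →+* R), (P K).map f = P R := by
    intro R _ f; ext i j
    exact (congrFun (single_map f i.succ 1) j).trans (by simp [P])
  have hsm : ∀ (R : Type v) [CommRing R] (a : R) (d : Matrix (Fin q.dim) (Fin q.dim) R) y,
      Qc (a • d) y = a * Qc d y := by
    intro R _ a d y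
    simp [Qc_apply, Finset.mul_sum, mul_assoc]
  obtain ⟨σ, h1, h2⟩ := S_lemma q.dim K n c ((P K).transpose * (Qc c v • q.c) * P K) hc (by
    intro M _ f x hM hx
    obtain ⟨w, hw⟩ := star_rep q hq f x hx hn c hM hL (fun i => f (v i))
    refine ⟨w, ?_⟩
    rw [Matrix.map_mul, Matrix.map_mul, Matrix.transpose_map, hPm, Qc_transform, hP, hw, Qc_map]
    have : (Qc c v • q.c).map f = f (Qc c v) • q.c.map f := by
      ext i j; simp
    rw [this, hsm]
    simp)
  refine ⟨Fintype.linearCombination K (fun i : Fin q.dim => σ i.succ), fun y => ?_⟩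
  rw [Fintype.linearCombination_apply,
    qsum_congr Finset.univ (Qc c) (Qc ((P K).transpose * (Qc c v • q.c) * P K))
      (fun i : Fin q.dim => σ i.succ) (fun i => Pi.single i.succ 1) (fun i => h1 _)
      (fun i j => h2 _ _) y, Qc_transform, hP, hsm]
  congr 2
  ext i
  simp [Finset.sum_apply, Pi.single_apply]

end star
end WK

namespace WK
open QuadraticMap Module

section pfister
variable {E : Type*} [Field E] {V V' : Type*} [AddCommGroup V] [Module E V]
  [AddCommGroup V'] [Module E V']

/-- Round forms: every represented value is a similarity factor. -/
def Round (Q : QuadraticForm E V) : Prop :=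
  ∀ x, Q x ≠ 0 → ∃ g : V →ₗ[E] V, ∀ v, Q (g v) = Q x * Q v

/-- The properties of Pfister forms that are used. -/
def PfP (Q : QuadraticForm E V) : Prop :=
  ND Q ∧ Round Q ∧ ((∃ x, x ≠ 0 ∧ Q x = 0) → Lagr Q)

theorem PfP.equiv {Q : QuadraticForm E V} {Q' : QuadraticForm E V'} (h : PfP Q)
    (he : Q.Equivalent Q') : PfP Q' := by
  refine ⟨h.1.equiv he, ?_, ?_⟩
  · obtain ⟨e⟩ := he
    intro x hx
    have hs : ∀ y, Q (e.toLinearEquiv.symm y) = Q' y := by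
      intro y
      have := e.map_app (e.toLinearEquiv.symm y)
      rw [← this]
      congr 1
      exact e.toLinearEquiv.apply_symm_apply y
    obtain ⟨g, hg⟩ := h.2.1 (e.toLinearEquiv.symm x) (by rwa [hs])
    refine ⟨e.toLinearEquiv.toLinearMap ∘ₗ g ∘ₗ e.toLinearEquiv.symm.toLinearMap, fun v => ?_⟩
    have := e.map_app (g (e.toLinearEquiv.symm v))
    rw [hg, hs, hs] at this
    exact this
  · rintro ⟨x, hx, hx0⟩
    refine (h.2.2 ?_).equiv he
    obtain ⟨e⟩ := he
    refine ⟨e.toLinearEquiv.symm x, by simpa using hx, ?_⟩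
    have := e.map_app (e.toLinearEquiv.symm x)
    rw [← this, ← hx0]
    congr 1
    exact e.toLinearEquiv.apply_symm_apply x

theorem PfP_Bn [CharP E 2] (b : E) : PfP (Bn 1 b) := by
  refine ⟨ND_Bn 1 b, ?_, fun ⟨x, hx, h⟩ => Lagr_of_isotropic_Bn x hx h⟩
  rintro ⟨s, t⟩ _
  refine ⟨LinearMap.prod (s • LinearMap.fst E E E - (b * t) • LinearMap.snd E E E)
    (s • LinearMap.snd E E E + t • LinearMap.fst E E E + t • LinearMap.snd E E E), ?_⟩
  rintro ⟨u, v⟩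
  simp only [Bn_apply, LinearMap.prod_apply, Function.prod_apply, LinearMap.add_apply, LinearMap.sub_apply,
    LinearMap.smul_apply, LinearMap.fst_apply, LinearMap.snd_apply, smul_eq_mul]
  ring

theorem round_quot {Q : QuadraticForm E V} (hr : Round Q) {u v : V} (hu : Q u ≠ 0) (hv : Q v ≠ 0) :
    ∃ g : V →ₗ[E] V, ∀ x, Q (g x) = Q v / Q u * Q x := by
  obtain ⟨g, hg⟩ := hr u hu
  obtain ⟨h, hh⟩ := hr v hv
  refine ⟨(Q u)⁻¹ • (h ∘ₗ g), fun x => ?_⟩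
  rw [LinearMap.smul_apply, QuadraticMap.map_smul, LinearMap.comp_apply, hh, hg]
  simp only [smul_eq_mul]
  field_simp

theorem polar_sim {Q : QuadraticForm E V} {g : V →ₗ[E] V} {t : E} (hg : ∀ x, Q (g x) = t * Q x)
    (x y : V) : polar Q (g x) (g y) = t * polar Q x y := by
  simp only [polar, ← _root_.map_add, hg]; ring

theorem PfP.step [CharP E 2] [FiniteDimensional E V] {Q : QuadraticForm E V} (h : PfP Q) {a : E}
    (ha : a ≠ 0) : PfP (Q.prod (a • Q)) := by
  have two : (2 : E) = 0 := CharTwo.two_eq_zero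
  obtain ⟨hnd, hr, hi⟩ := h
  have hev : ∀ p q, (Q.prod (a • Q)) (p, q) = Q p + a * Q q := by
    intro p q; simp
  refine ⟨hnd.prod (hnd.smul ha), ?_, ?_⟩
  · rintro ⟨u, v⟩ huv
    rw [hev] at huv
    rw [hev]
    by_cases hv : Q v = 0
    · rw [hv, mul_zero, add_zero] at huv ⊢
      obtain ⟨g, hg⟩ := hr u huv
      refine ⟨LinearMap.prodMap g g, ?_⟩
      rintro ⟨p, q⟩
      rw [LinearMap.prodMap_apply, hev, hev, hg, hg]; ring
    by_cases hu : Q u = 0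
    · rw [hu, zero_add] at huv ⊢
      obtain ⟨g, hg⟩ := hr v hv
      refine ⟨LinearMap.prod ((a • g) ∘ₗ LinearMap.snd E V V) (g ∘ₗ LinearMap.fst E V V), ?_⟩
      rintro ⟨p, q⟩
      rw [LinearMap.prod_apply, Function.prod_apply, hev, hev]
      simp only [LinearMap.comp_apply, LinearMap.fst_apply, LinearMap.snd_apply,
        LinearMap.smul_apply, QuadraticMap.map_smul, hg, smul_eq_mul]
      ring
    obtain ⟨g, hg⟩ := hr u hu
    obtain ⟨k, hk⟩ := round_quot hr hu hv
    set t := Q v / Q u with ht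
    have ht0 : t ≠ 0 := div_ne_zero hv hu
    have hkinj : Function.Injective k := by
      refine (hnd.smul ht0).injective (Q' := Q) k fun x => ?_
      rw [hk]; simp
    let ke := LinearEquiv.ofInjectiveEndo k hkinj
    have hke : ∀ x, k (ke.symm x) = x := fun x => ke.apply_symm_apply x
    have hks : ∀ x, t * Q (ke.symm x) = Q x := fun x => by rw [← hk, hke]
    refine ⟨(LinearMap.prodMap g g) ∘ₗ LinearMap.prod
      (LinearMap.fst E V V + a • (k ∘ₗ LinearMap.snd E V V))
      (t • (ke.symm.toLinearMap ∘ₗ LinearMap.fst E V V) + LinearMap.snd E V V), ?_⟩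
    rintro ⟨p, q⟩
    have hB : polar Q p (k q) = t * polar Q (ke.symm p) q := by
      rw [← polar_sim hk, hke]
    rw [LinearMap.comp_apply, LinearMap.prod_apply, Function.prod_apply, LinearMap.prodMap_apply, hev, hev]
    simp only [LinearMap.comp_apply, LinearMap.fst_apply, LinearMap.snd_apply,
        LinearMap.smul_apply, LinearMap.add_apply, LinearEquiv.coe_coe, hg]
    rw [QuadraticMap.map_add Q, QuadraticMap.map_add Q, QuadraticMap.map_smul,
      QuadraticMap.map_smul, polar_smul_left, polar_smul_right, hB, hk]
    simp only [smul_eq_mul]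
    have h1 : Q u * t = Q v := by rw [ht]; field_simp
    rw [← h1]
    linear_combination Q u * a * t * hks p + Q u * a * t * polar Q (ke.symm p) q * two
  · rintro ⟨⟨u, v⟩, hne, h0⟩
    by_cases hiso : ∃ x, x ≠ 0 ∧ Q x = 0
    · have hl := hi hiso
      refine hl.prod ?_
      obtain ⟨I, hI, hd⟩ := hl
      exact ⟨I, fun x hx => by simp [hI x hx], hd⟩
    · push Not at hiso
      rw [hev] at h0
      have hv : v ≠ 0 := by
        rintro rfl
        rw [QuadraticMap.map_zero, mul_zero, add_zero] at h0
        by_cases hu : u = 0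
        · subst hu; exact hne rfl
        · exact hiso u hu h0
      have hv0 := hiso v hv
      have hu0 : Q u ≠ 0 := by
        intro hu
        rw [hu, zero_add] at h0
        exact (mul_ne_zero ha hv0) h0
      obtain ⟨g, hg⟩ := round_quot hr hu0 hv0
      refine Lagr.graph g (fun x => ?_) le_rfl
      show a • Q (g x) = Q x
      rw [hg, smul_eq_mul]
      field_simp
      linear_combination Q x * h0 - Q x * Q u * two

end pfister

section bridge
variable {E F : Type*} [Field E] [Field F]

theorem isometric_iff (q q' : QF E) : QF.Isometric q q' ↔ (Qc q.c).Equivalent (Qc q'.c) := by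
  constructor
  · rintro ⟨e, he⟩
    refine ⟨{ e with map_app' := fun x => ?_ }⟩
    have := he x
    rw [QF.eval, QF.eval, ← Qc_apply, ← Qc_apply] at this
    exact this
  · rintro ⟨e⟩
    refine ⟨e.toLinearEquiv, fun x => ?_⟩
    rw [QF.eval, QF.eval, ← Qc_apply, ← Qc_apply]
    exact e.map_app x

theorem nonsingular_iff (q : QF E) : q.Nonsingular ↔ ND (Qc q.c) := by
  constructor
  · intro h x hx
    refine h x ?_
    ext i
    have := hx (Pi.single i 1)
    rwa [polar_Qc, single_one_dotProduct] at this
  · intro h x hx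
    refine h x fun y => ?_
    rw [polar_Qc, hx]; simp

theorem orthSum_equiv (q q' : QF E) :
    ((Qc q.c).prod (Qc q'.c)).Equivalent (Qc (q.orthSum q').c) := by
  refine ⟨{ (LinearEquiv.sumArrowLequivProdArrow (Fin q.dim) (Fin q'.dim) E E).symm.trans
    (LinearEquiv.funCongrLeft E E finSumFinEquiv.symm) with map_app' := ?_ }⟩
  rintro ⟨x, y⟩
  show Qc (Matrix.reindex finSumFinEquiv finSumFinEquiv (Matrix.fromBlocks q.c 0 0 q'.c))
    (fun i => Sum.elim x y (finSumFinEquiv.symm i)) = _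
  rw [Qc_apply, QuadraticMap.prod_apply, Qc_apply, Qc_apply]
  simp [Fin.sum_univ_add]

theorem smul_Qc {n : ℕ} (a : E) (c : Matrix (Fin n) (Fin n) E) : Qc (a • c) = a • Qc c := by
  ext x
  simp [Qc_apply, Finset.mul_sum, mul_assoc]

theorem bin_equiv (a b : E) : (Bn a b).Equivalent (Qc (QF.bin a b).c) := by
  refine ⟨{ (LinearEquiv.finTwoArrow E E).symm with map_app' := ?_ }⟩
  rintro ⟨x, y⟩
  show Qc (!![a, 1; 0, b]) ![x, y] = _
  rw [Qc_apply, Bn_apply]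
  simp [Fin.sum_univ_two]
  ring

theorem map_orthSum (f : F →+* E) (q q' : QF F) :
    (q.orthSum q').map f = (q.map f).orthSum (q'.map f) := by
  unfold QF.map QF.orthSum
  simp only
  congr 1
  ext i j
  refine Fin.addCases (fun i => ?_) (fun i => ?_) i <;>
  refine Fin.addCases (fun j => ?_) (fun j => ?_) j <;> simp <;> rfl

theorem map_smul' (f : F →+* E) (a : F) (q : QF F) :
    (q.smul a).map f = (q.map f).smul (f a) := by
  unfold QF.map QF.smul
  simp only
  congr 1
  ext i j
  exact _root_.map_mul f _ _

theorem map_bin (f : F →+* E) (a b : F) : (QF.bin a b).map f = QF.bin (f a) (f b) := by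
  unfold QF.map QF.bin
  congr 1
  ext i j
  fin_cases i <;> fin_cases j <;> simp

theorem map_pfTensor (f : F →+* E) (l : List F) (q : QF F) :
    (QF.pfTensor l q).map f = QF.pfTensor (l.map f) (q.map f) := by
  induction l with
  | nil => rfl
  | cons a l ih =>
    show ((QF.pfTensor l q).orthSum ((QF.pfTensor l q).smul a)).map f =
      (QF.pfTensor (l.map f) (q.map f)).orthSum ((QF.pfTensor (l.map f) (q.map f)).smul (f a))
    rw [map_orthSum, map_smul', ih]

theorem pfTensor_cons (a : E) (l : List E) (q : QF E) :
    QF.pfTensor (a :: l) q = (QF.pfTensor l q).orthSum ((QF.pfTensor l q).smul a) := rfl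

theorem PfP_pfTensor [CharP E 2] (l : List E) (hl : ∀ a ∈ l, a ≠ 0) (b : E) :
    PfP (Qc (QF.pfTensor l (QF.bin 1 b)).c) := by
  induction l with
  | nil => exact (PfP_Bn b).equiv (bin_equiv 1 b)
  | cons a l ih =>
    rw [pfTensor_cons]
    have h1 := (ih (fun x hx => hl x (by simp [hx]))).step (hl a (by simp))
    refine h1.equiv ?_
    have := orthSum_equiv (QF.pfTensor l (QF.bin 1 b)) ((QF.pfTensor l (QF.bin 1 b)).smul a)
    rw [← smul_Qc] at *
    exact this

theorem PS_orthSum (r r' : QF E) {i0 i1 : Fin r.dim} (h : PS r.c i0 i1) :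
    PS (r.orthSum r').c (Fin.castAdd r'.dim i0) (Fin.castAdd r'.dim i1) := by
  obtain ⟨h1, h2, h3, h4, h5⟩ := h
  show PS (Matrix.reindex finSumFinEquiv finSumFinEquiv
      (Matrix.fromBlocks r.c 0 0 r'.c)) (Fin.castAdd r'.dim i0) (Fin.castAdd r'.dim i1)
  refine ⟨by simpa [Fin.ext_iff] using h1, by simpa using h2, by simpa using h3, ?_, ?_⟩
  · intro j
    refine Fin.addCases (fun j => ?_) (fun j => ?_) j
    · intro a b
      simpa using h4 j (fun h => a (by rw [h])) (fun h => b (by rw [h]))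
    · simp
  · intro j
    refine Fin.addCases (fun j => ?_) (fun j => ?_) j
    · intro a
      simpa using h5 j (fun h => a (by rw [h]))
    · simp

theorem PS_pfTensor (l : List E) (b : E) :
    ∃ i0 i1, PS (QF.pfTensor l (QF.bin 1 b)).c i0 i1 := by
  induction l with
  | nil =>
    refine ⟨(0 : Fin 2), (1 : Fin 2), ?_⟩
    show PS (!![1, 1; 0, b]) (0 : Fin 2) (1 : Fin 2)
    refine ⟨by simp, by simp, by simp, ?_, ?_⟩
    · intro j h1 h2; fin_cases j <;> simp_all
    · intro j h1; fin_cases j <;> simp_all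
  | cons a l ih =>
    obtain ⟨i0, i1, h⟩ := ih
    exact ⟨_, _, PS_orthSum _ ((QF.pfTensor l (QF.bin 1 b)).smul a) h⟩

theorem hyp_succ (k : ℕ) : (QF.hyp (k + 1) : QF E) = QF.hypPlane.orthSum (QF.hyp k) := rfl

theorem Lagr_zero {n : ℕ} (hn : n = 0) (c : Matrix (Fin n) (Fin n) E) : Lagr (Qc c) :=
  ⟨⊥, by simp, by simp [hn]⟩

theorem ND_zero {n : ℕ} (hn : n = 0) (c : Matrix (Fin n) (Fin n) E) : ND (Qc c) := by
  subst hn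
  intro x _
  exact Subsingleton.elim _ _

theorem hyp_props [CharP E 2] (k : ℕ) : ND (Qc (QF.hyp k : QF E).c) ∧ Lagr (Qc (QF.hyp k : QF E).c) := by
  induction k with
  | zero => exact ⟨ND_zero rfl _, Lagr_zero rfl _⟩
  | succ k ih =>
    rw [hyp_succ]
    constructor
    · exact (((ND_Bn 0 0).equiv (bin_equiv 0 0)).prod ih.1).equiv (orthSum_equiv QF.hypPlane _)
    · exact ((Lagr_H.equiv (bin_equiv 0 0)).prod ih.2).equiv (orthSum_equiv QF.hypPlane _)

theorem hyperbolic_aux [CharP E 2] : ∀ (n : ℕ) (c : Matrix (Fin n) (Fin n) E), ND (Qc c) →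
    Lagr (Qc c) → ∃ k, (Qc c).Equivalent (Qc (QF.hyp k : QF E).c) := by
  intro n
  induction n using Nat.strong_induction_on with
  | _ n ih =>
  intro c hc hl
  have hid : ∀ (k : ℕ) (d : Matrix (Fin k) (Fin k) E), d.map (RingHom.id E) = d := by
    intro k d; ext; simp
  rcases Nat.eq_zero_or_pos n with hn | hn
  · subst hn
    refine ⟨0, ?_⟩
    exact ⟨{ LinearEquiv.refl E (Fin 0 → E) with
      map_app' := fun x => by simp [Qc_apply]; rfl }⟩
  · obtain ⟨I, hI, hd⟩ := hl
    rw [finrank_fin_fun] at hd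
    obtain ⟨m, d, hm, hd', he, J, hJ, hJd⟩ := estep (RingHom.id E) (fun x => ⟨x ^ 2, rfl⟩) c hc I
      (by rw [hid]; exact hI) (finrank E I - 1) (by omega)
    rw [hid, hid] at he
    rw [hid] at hJ
    obtain ⟨k, hk⟩ := ih m (by omega) d hd' ⟨J, hJ, by rw [finrank_fin_fun]; omega⟩
    refine ⟨k + 1, ?_⟩
    rw [hyp_succ]
    refine he.symm.trans (QuadraticMap.Equivalent.trans ?_ (orthSum_equiv QF.hypPlane _))
    exact QuadraticMap.Equivalent.prod (bin_equiv 0 0) hk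

theorem hyperbolic_iff [CharP E 2] (q : QF E) (hq : ND (Qc q.c)) :
    QF.Hyperbolic q ↔ Lagr (Qc q.c) := by
  constructor
  · rintro ⟨k, hk⟩
    exact (hyp_props k).2.equiv ((isometric_iff _ _).1 hk).symm
  · intro h
    obtain ⟨k, hk⟩ := hyperbolic_aux q.dim q.c hq h
    exact ⟨k, (isometric_iff _ _).2 hk⟩

theorem ND.map (f : F →+* E) {n : ℕ} {c : Matrix (Fin n) (Fin n) F} (h : ND (Qc c)) :
    ND (Qc (c.map f)) := by
  have hu : IsUnit (c + c.transpose) := by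
    rw [← Matrix.mulVec_injective_iff_isUnit]
    rw [← Matrix.coe_mulVecLin, injective_iff_map_eq_zero]
    intro u hu
    refine h u fun y => ?_
    rw [polar_Qc, show (c + c.transpose).mulVec u = 0 from hu]; simp
  have hu' : IsUnit ((c + c.transpose).map f) := by
    have := hu.map (RingHom.mapMatrix f : Matrix (Fin n) (Fin n) F →+* _)
    simpa using this
  rw [← Matrix.mulVec_injective_iff_isUnit] at hu'
  intro v hv
  refine hu' ?_
  simp only [Matrix.mulVec_zero]
  ext i
  have := hv (Pi.single i 1)
  rw [polar_Qc, single_one_dotProduct] at this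
  rw [Pi.zero_apply, ← this]
  congr 2
  ext i j; simp

/-- A quadric of the relevant shape has a rational point over its function field. -/
theorem function_field_isotropic {K : Type*} [Field K] [CharP K 2] (q : QF K)
    [IsDomain (QF.CoordRing q)] {i0 i1 : Fin q.dim} (hq : PS q.c i0 i1) :
    ∃ x, x ≠ 0 ∧ Qc (q.c.map ((algebraMap (QF.CoordRing q) (QF.FunctionField q)).comp
      (algebraMap K (QF.CoordRing q)))) x = 0 := by
  have hpoly : q.toPoly = Qc (q.c.map MvPolynomial.C) MvPolynomial.X := by
    rw [Qc_apply, QF.toPoly]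
    refine Finset.sum_congr rfl fun i _ => Finset.sum_congr rfl fun j _ => ?_
    rw [Matrix.map_apply]; ring
  let ι : MvPolynomial (Fin q.dim) K →+* QF.FunctionField q :=
    (algebraMap (QF.CoordRing q) (QF.FunctionField q)).comp (Ideal.Quotient.mk _)
  refine ⟨fun i => ι (MvPolynomial.X i), ?_, ?_⟩
  · intro h
    have h1 := congrFun h i1
    have h2 : algebraMap (QF.CoordRing q) (QF.FunctionField q)
      (Ideal.Quotient.mk _ (MvPolynomial.X i1)) = 0 := h1
    rw [map_eq_zero_iff _ (IsFractionRing.injective (QF.CoordRing q) (QF.FunctionField q)),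
      Ideal.Quotient.eq_zero_iff_mem] at h2
    obtain ⟨k, hk⟩ := h2
    obtain ⟨H, hH⟩ := Ideal.mem_span_singleton'.1 hk
    let f := algebraMap K (AlgebraicClosure K)
    let y : Fin q.dim → AlgebraicClosure K := Pi.single i1 1
    obtain ⟨z, hz⟩ := IsAlgClosed.exists_root (Polynomial.X ^ 2 + Polynomial.X +
      Polynomial.C (Qc (q.c.map f) (Function.update y i0 0))) (by
        rw [show Polynomial.degree (Polynomial.X ^ 2 + Polynomial.X +
          Polynomial.C (Qc (q.c.map f) (Function.update y i0 0))) = 2 by compute_degree!]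
        simp)
    simp only [Polynomial.IsRoot, Polynomial.eval_add, Polynomial.eval_pow, Polynomial.eval_X,
      Polynomial.eval_C] at hz
    have h3 := congrArg (MvPolynomial.eval₂Hom f (Function.update y i0 z)) hH
    rw [map_mul, map_pow, MvPolynomial.eval₂Hom_X', Function.update_of_ne hq.1.symm] at h3
    have h4 : MvPolynomial.eval₂Hom f (Function.update y i0 z) q.toPoly = 0 := by
      rw [hpoly, ← Qc_map, Matrix.map_map]
      have h5 : q.c.map ((MvPolynomial.eval₂Hom f (Function.update y i0 z)) ∘ MvPolynomial.C)
          = q.c.map f := by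
        ext i j; simp
      rw [h5]
      simp only [MvPolynomial.eval₂Hom_X']
      rw [(hq.map f).eval]
      simp only [Function.update_self, Function.update_idem, Function.update_of_ne hq.1.symm]
      have hy1 : y i1 = 1 := by simp [y]
      rw [hy1]
      linear_combination hz
    rw [h4] at h3
    simp [y] at h3
  · have h1 : q.c.map ((algebraMap (QF.CoordRing q) (QF.FunctionField q)).comp
      (algebraMap K (QF.CoordRing q))) = (q.c.map MvPolynomial.C).map ι := by
      rw [Matrix.map_map]; rfl
    rw [h1, Qc_map, ← hpoly]
    have : (Ideal.Quotient.mk (Ideal.span {q.toPoly}).radical) q.toPoly = 0 :=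
      Ideal.Quotient.eq_zero_iff_mem.2 (Ideal.le_radical (Ideal.subset_span rfl))
    simp [ι, this]

end bridge
end WK

namespace WK
open QuadraticMap Module

section wittgroup
universe u v
variable {E : Type u} [Field E] [CharP E 2]

theorem Lagr.of_equiv {V V' : Type*} [AddCommGroup V] [Module E V] [AddCommGroup V'] [Module E V']
    [FiniteDimensional E V] [FiniteDimensional E V']
    {Q : QuadraticForm E V} {Q' : QuadraticForm E V'} (h : Q.Equivalent Q') : Lagr (Q.prod Q') :=
  (Lagr.self Q).equiv (QuadraticMap.Equivalent.prod (QuadraticMap.Equivalent.refl Q) h)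

theorem Lagr.comm4 {V₁ V₂ V₃ V₄ : Type*} [AddCommGroup V₁] [Module E V₁] [AddCommGroup V₂]
    [Module E V₂] [AddCommGroup V₃] [Module E V₃] [AddCommGroup V₄] [Module E V₄]
    [FiniteDimensional E V₁] [FiniteDimensional E V₂] [FiniteDimensional E V₃]
    [FiniteDimensional E V₄]
    {Q₁ : QuadraticForm E V₁} {Q₂ : QuadraticForm E V₂} {Q₃ : QuadraticForm E V₃}
    {Q₄ : QuadraticForm E V₄} (h : Lagr ((Q₁.prod Q₂).prod (Q₃.prod Q₄))) :
    Lagr ((Q₁.prod Q₃).prod (Q₂.prod Q₄)) := by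
  have he : ((Q₁.prod Q₂).prod (Q₃.prod Q₄)).Equivalent ((Q₁.prod Q₃).prod (Q₂.prod Q₄)) :=
    ⟨QuadraticMap.IsometryEquiv.prodProdProdComm Q₁ Q₂ Q₃ Q₄⟩
  exact Lagr.equiv h he

theorem Lagr.assoc {V₁ V₂ V₃ : Type*} [AddCommGroup V₁] [Module E V₁] [AddCommGroup V₂]
    [Module E V₂] [AddCommGroup V₃] [Module E V₃]
    [FiniteDimensional E V₁] [FiniteDimensional E V₂] [FiniteDimensional E V₃]
    {Q₁ : QuadraticForm E V₁} {Q₂ : QuadraticForm E V₂} {Q₃ : QuadraticForm E V₃}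
    (h : Lagr (Q₁.prod (Q₂.prod Q₃))) : Lagr ((Q₁.prod Q₂).prod Q₃) := by
  have he := (prodAssoc_equiv Q₁ Q₂ Q₃).symm
  exact Lagr.equiv h he

theorem Lagr.swap {V₁ V₂ : Type*} [AddCommGroup V₁] [Module E V₁] [AddCommGroup V₂]
    [Module E V₂] [FiniteDimensional E V₁] [FiniteDimensional E V₂]
    {Q₁ : QuadraticForm E V₁} {Q₂ : QuadraticForm E V₂} (h : Lagr (Q₁.prod Q₂)) :
    Lagr (Q₂.prod Q₁) := by
  have he := prodComm_equiv Q₁ Q₂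
  exact Lagr.equiv h he

theorem Lagr.trans' {V₁ V₂ V₃ : Type*} [AddCommGroup V₁] [Module E V₁] [AddCommGroup V₂]
    [Module E V₂] [AddCommGroup V₃] [Module E V₃]
    [FiniteDimensional E V₁] [FiniteDimensional E V₂] [FiniteDimensional E V₃]
    {Q₁ : QuadraticForm E V₁} {Q₂ : QuadraticForm E V₂} {Q₃ : QuadraticForm E V₃}
    (hnd : ND Q₂)
    (h : Lagr (Q₁.prod Q₂)) (h' : Lagr (Q₂.prod Q₃)) : Lagr (Q₁.prod Q₃) := by
  have h1 : Lagr (Q₃.prod Q₂) := h'.swap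
  have h2 : Lagr ((Q₁.prod Q₂).prod (Q₃.prod Q₂)) := Lagr.prod h h1
  have h3 : Lagr ((Q₁.prod Q₃).prod (Q₂.prod Q₂)) := h2.comm4
  exact Lagr.cancel (hnd.prod hnd) h3 (Lagr.self Q₂)

/-- Nonsingular forms. -/
def NQ (E : Type u) [Field E] : Type u := {q : QF E // ND (Qc q.c)}

/-- Witt equivalence of nonsingular forms. -/
instance wittSetoid (E : Type u) [Field E] [CharP E 2] : Setoid (NQ E) where
  r a b := Lagr ((Qc a.1.c).prod (Qc b.1.c))
  iseqv := by
    refine ⟨fun a => Lagr.self _, fun h => Lagr.swap h, ?_⟩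
    intro a b c h1 h2
    exact Lagr.trans' b.2 h1 h2

/-- The Witt group. -/
def WG (E : Type u) [Field E] [CharP E 2] : Type u := Quotient (wittSetoid E)

/-- Orthogonal sum of nonsingular forms. -/
def NQ.add (a b : NQ E) : NQ E := ⟨a.1.orthSum b.1, (a.2.prod b.2).equiv (orthSum_equiv _ _)⟩

/-- The class of a nonsingular form. -/
def w (q : QF E) (hq : ND (Qc q.c)) : WG E := Quotient.mk (wittSetoid E) ⟨q, hq⟩

theorem w_eq_iff {q q' : QF E} (hq : ND (Qc q.c)) (hq' : ND (Qc q'.c)) :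
    w q hq = w q' hq' ↔ Lagr ((Qc q.c).prod (Qc q'.c)) := Quotient.eq (r := wittSetoid E)

instance : Add (WG E) := ⟨Quotient.map₂ NQ.add (by
  intro a a' ha b b' hb
  have ha' : Lagr ((Qc a.1.c).prod (Qc a'.1.c)) := ha
  have hb' : Lagr ((Qc b.1.c).prod (Qc b'.1.c)) := hb
  have h := (Lagr.prod ha' hb').comm4
  exact h.equiv (QuadraticMap.Equivalent.prod (orthSum_equiv _ _) (orthSum_equiv _ _)))⟩

instance : Zero (WG E) := ⟨w QF.nil (ND_zero rfl _)⟩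

instance : Neg (WG E) := ⟨id⟩

theorem ND_orthSum {q q' : QF E} (hq : ND (Qc q.c)) (hq' : ND (Qc q'.c)) :
    ND (Qc (q.orthSum q').c) := (hq.prod hq').equiv (orthSum_equiv _ _)

theorem w_add {q q' : QF E} (hq : ND (Qc q.c)) (hq' : ND (Qc q'.c))
    (h : ND (Qc (q.orthSum q').c)) : w (q.orthSum q') h = w q hq + w q' hq' := rfl

theorem w_zero (q : QF E) (hq : ND (Qc q.c)) : w q hq = 0 ↔ Lagr (Qc q.c) := by
  have h0 : Lagr (Qc (QF.nil : QF E).c) := Lagr_zero rfl _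
  refine (w_eq_iff hq (ND_zero rfl _)).trans ?_
  constructor
  · intro h
    exact h.cancel (ND_zero rfl _) h0
  · intro h
    exact h.prod h0

instance : AddCommGroup (WG E) :=
  { AddGroup.ofLeftAxioms (G := WG E)
      (by
        rintro ⟨a⟩ ⟨b⟩ ⟨c⟩
        refine Quotient.sound (s := wittSetoid E) ?_
        refine Lagr.of_equiv ?_
        refine (orthSum_equiv _ _).symm.trans ?_
        refine (QuadraticMap.Equivalent.prod (orthSum_equiv _ _).symm
          (QuadraticMap.Equivalent.refl _)).trans ?_
        refine (prodAssoc_equiv _ _ _).trans ?_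
        refine QuadraticMap.Equivalent.trans ?_ (orthSum_equiv _ _)
        exact QuadraticMap.Equivalent.prod (QuadraticMap.Equivalent.refl _) (orthSum_equiv _ _))
      (by
        rintro ⟨a⟩
        refine Quotient.sound (s := wittSetoid E) ?_
        show Lagr ((Qc (QF.orthSum QF.nil a.1).c).prod (Qc a.1.c))
        have h0 : Lagr (Qc (QF.nil : QF E).c) := Lagr_zero rfl _
        have h1 := (h0.prod (Lagr.self (Qc a.1.c))).assoc
        exact h1.equiv (QuadraticMap.Equivalent.prod (orthSum_equiv _ _)
          (QuadraticMap.Equivalent.refl _)))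
      (by
        rintro ⟨a⟩
        refine (w_zero (a.1.orthSum a.1) (ND_orthSum a.2 a.2)).2 ?_
        exact (Lagr.self (Qc a.1.c)).equiv (orthSum_equiv _ _)) with
    add_comm := by
      rintro ⟨a⟩ ⟨b⟩
      refine Quotient.sound (s := wittSetoid E) ?_
      refine Lagr.of_equiv ?_
      exact (orthSum_equiv _ _).symm.trans ((prodComm_equiv _ _).trans (orthSum_equiv _ _)) }

theorem w_self (x : WG E) : x + x = 0 := neg_add_cancel x

variable {F : Type v} [Field F] [CharP F 2]

/-- Functoriality of Witt groups. -/
def wmap (f : F →+* E) : WG F →+ WG E where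
  toFun := Quotient.map (fun a => ⟨a.1.map f, a.2.map f⟩) (by
    intro a b h
    have h1 : Lagr (Qc ((a.1.orthSum b.1).map f).c) :=
      Lagr.map f (h.equiv (orthSum_equiv a.1 b.1))
    rw [map_orthSum] at h1
    exact h1.equiv (orthSum_equiv _ _).symm)
  map_zero' := by
    refine (w_zero (QF.nil.map f) (ND_zero rfl _)).2 (Lagr_zero rfl _)
  map_add' := by
    rintro ⟨a⟩ ⟨b⟩
    refine Quotient.sound (s := wittSetoid E) ?_
    show Lagr ((Qc ((a.1.orthSum b.1).map f).c).prod (Qc ((a.1.map f).orthSum (b.1.map f)).c))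
    rw [map_orthSum]
    exact Lagr.self _

theorem ND_qmap (f : F →+* E) {q : QF F} (hq : ND (Qc q.c)) : ND (Qc (q.map f).c) := hq.map f

theorem wmap_w (f : F →+* E) (q : QF F) (hq : ND (Qc q.c)) :
    wmap f (w q hq) = w (q.map f) (ND_qmap f hq) := rfl

end wittgroup
end WK

namespace WK
open QuadraticMap Module

section main
universe u v x
variable {F : Type u} [Field F] [CharP F 2] {K : Type v} [Field K] [CharP K 2]
  {L : Type x} [Field L] [CharP L 2]

theorem ND_smul {π : QF F} (hπ : ND (Qc π.c)) {c : F} (hc : c ≠ 0) :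
    ND (Qc (QF.smul c π).c) := by
  have := hπ.smul hc
  rw [← smul_Qc] at this
  exact this

theorem Lagr_smul {π : QF F} (hπ : Lagr (Qc π.c)) (c : F) : Lagr (Qc (QF.smul c π).c) := by
  obtain ⟨I, hI, hd⟩ := hπ
  refine ⟨I, fun x hx => ?_, hd⟩
  show Qc (c • π.c) x = 0
  rw [smul_Qc]
  have h : Qc π.c x = 0 := hI x hx
  show c • Qc π.c x = 0
  rw [h, smul_zero]

theorem sumList_cons (q : QF F) (l : List (QF F)) :
    QF.sumList (q :: l) = q.orthSum (QF.sumList l) := rfl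

theorem ND_sum {π : QF F} (hπ : ND (Qc π.c)) (bs : List F) (h : ∀ c ∈ bs, c ≠ 0) :
    ND (Qc (QF.sumList (bs.map fun c => QF.smul c π)).c) := by
  induction bs with
  | nil => exact ND_zero rfl _
  | cons c bs ih =>
    exact ND_orthSum (ND_smul hπ (h c (by simp))) (ih fun d hd => h d (by simp [hd]))

theorem Lagr_sum {π : QF F} (g : F →+* L) (hL : Lagr (Qc (π.map g).c)) (bs : List F) :
    Lagr (Qc ((QF.sumList (bs.map fun c => QF.smul c π)).map g).c) := by
  induction bs with
  | nil => exact Lagr_zero rfl _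
  | cons c bs ih =>
    rw [List.map_cons, sumList_cons, map_orthSum, map_smul']
    exact ((Lagr_smul hL (g c)).prod ih).equiv (orthSum_equiv _ _)

theorem main_ind (f : F →+* K) (hK : ∀ x : K, ∃ y : F, f y = x ^ 2) (g : K →+* L)
    (π : QF F) (hπ : ND (Qc π.c)) (hdim : π.dim ≠ 0) (hπL : Lagr (Qc (π.map (g.comp f)).c))
    (hstar : ∀ (n : ℕ), n ≠ 0 → ∀ c : Matrix (Fin n) (Fin n) K, An (Qc c) →
      Lagr (Qc (c.map g)) → ∀ v : Fin n → K, ∃ σ : (Fin π.dim → K) →ₗ[K] (Fin n → K),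
        ∀ y, Qc c (σ y) = Qc c v * Qc (π.map f).c y) :
    ∀ (N : ℕ) (φ : QF F), φ.dim = N → ∀ hφ : ND (Qc φ.c), wmap g (wmap f (w φ hφ)) = 0 →
      ∃ (ψ : QF F) (hψ : ND (Qc ψ.c)) (bs : List F) (hb : ∀ c ∈ bs, c ≠ 0),
        wmap f (w ψ hψ) = 0 ∧ w φ hφ = w ψ hψ + w _ (ND_sum hπ bs hb) := by
  intro N
  induction N using Nat.strong_induction_on with
  | _ N ih =>
  intro φ hN hφ h0
  by_cases hn : φ.dim = 0
  · refine ⟨QF.nil, ND_zero rfl _, [], by simp, ?_, ?_⟩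
    · have : w (QF.nil : QF F) (ND_zero rfl _) = 0 := rfl
      rw [this, _root_.map_zero]
    · have : w (QF.nil : QF F) (ND_zero rfl _) = 0 := rfl
      rw [(w_zero φ hφ).2 (Lagr_zero hn _), this, zero_add]
      rfl
  by_cases han : An (Qc (φ.c.map f))
  · -- anisotropic over K
    have hex : ∃ v : Fin φ.dim → F, v ≠ 0 := by
      refine ⟨fun _ => 1, fun h => ?_⟩
      have := congrFun h ⟨0, Nat.pos_of_ne_zero hn⟩
      simp at this
    obtain ⟨v, hv⟩ := hex
    have hmv : Qc (φ.c.map f) (fun i => f (v i)) = f (Qc φ.c v) := Qc_map f φ.c v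
    have hc : Qc φ.c v ≠ 0 := by
      intro h
      rw [h, _root_.map_zero] at hmv
      have := han _ hmv
      refine hv (funext fun i => ?_)
      have h1 := congrFun this i
      have h2 : f (v i) = 0 := h1
      simpa using h2
    have hLφ : Lagr (Qc ((φ.c.map f).map g)) := by
      rw [wmap_w, wmap_w, w_zero] at h0
      exact h0
    obtain ⟨σ, hσ⟩ := hstar φ.dim hn (φ.c.map f) han hLφ (fun i => f (v i))
    rw [hmv] at hσ
    set c := Qc φ.c v with hcdef
    have hcπ := ND_smul hπ hc
    let θ := φ.orthSum (π.smul c)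
    have hθ : ND (Qc θ.c) := ND_orthSum hφ hcπ
    have hsub : ∃ I : Submodule K (Fin θ.dim → K), (∀ x ∈ I, Qc (θ.c.map f) x = 0) ∧
        π.dim ≤ finrank K I := by
      have heq : ((Qc (φ.map f).c).prod (Qc ((π.map f).smul (f c)).c)).Equivalent
          (Qc (θ.map f).c) := by
        have h1 := orthSum_equiv (φ.map f) ((π.map f).smul (f c))
        have h2 : θ.map f = (φ.map f).orthSum ((π.map f).smul (f c)) := by
          rw [← map_smul', ← map_orthSum]
        rw [h2]
        exact h1
      obtain ⟨e⟩ := heq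
      let τ : (Fin π.dim → K) →ₗ[K] (Fin θ.dim → K) :=
        e.toLinearEquiv.toLinearMap ∘ₗ (LinearMap.prod σ LinearMap.id)
      have hτ : Function.Injective τ := by
        intro a b hab
        have := e.toLinearEquiv.injective hab
        exact (Prod.mk.inj this).2
      refine ⟨LinearMap.range τ, ?_, ?_⟩
      · rintro _ ⟨y, rfl⟩
        have h1 := e.map_app (σ y, y)
        have h2 : ((Qc (φ.map f).c).prod (Qc ((π.map f).smul (f c)).c)) (σ y, y) = 0 := by
          rw [QuadraticMap.prod_apply]
          have h3 : Qc ((π.map f).smul (f c)).c y = f c * Qc (π.map f).c y := by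
            show Qc (f c • (π.map f).c) y = _
            rw [smul_Qc]; rfl
          have h4 : Qc (φ.map f).c (σ y) = f c * Qc (π.map f).c y := hσ y
          rw [h3, h4]
          exact CharTwo.add_self_eq_zero _
        rw [h2] at h1
        exact h1
      · rw [LinearMap.finrank_range_of_inj hτ, finrank_fin_fun]
    obtain ⟨I, hI, hk⟩ := hsub
    obtain ⟨m, d, hm, hd, hl⟩ := eplus f hK π.dim θ.dim θ.c hθ I hI hk
    let θ' : QF F := ⟨m, d⟩
    have hdθ : θ.dim = φ.dim + π.dim := rfl
    have hKθ : wmap f (w θ hθ) = wmap f (w θ' hd) := by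
      rw [wmap_w, wmap_w, w_eq_iff]
      exact hl
    have hwθ : w θ hθ = w φ hφ + w _ hcπ := w_add hφ hcπ hθ
    have hcL : wmap g (wmap f (w _ hcπ)) = 0 := by
      rw [wmap_w, wmap_w, w_zero, map_smul', map_smul']
      exact Lagr_smul (π := (π.map f).map g) hπL _
    have hLθ : wmap g (wmap f (w θ' hd)) = 0 := by
      rw [← hKθ, hwθ, _root_.map_add, _root_.map_add, h0, hcL, add_zero]
    obtain ⟨ψ', hψ', bs, hb, h1, h2⟩ := ih m (by omega) θ' rfl hd hLθ
    have hA := ND_orthSum (q' := θ') hθ hd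
    have hB := ND_orthSum hA hψ'
    have hbs : ∀ d ∈ c :: bs, d ≠ 0 := by
      intro d hd
      rcases List.mem_cons.1 hd with h | h
      · rw [h]; exact hc
      · exact hb d h
    have hwB : w _ hB = w φ hφ + w _ hcπ + w θ' hd + w ψ' hψ' := by
      rw [w_add hA hψ' hB, w_add (q' := θ') hθ hd hA, hwθ]
    have hwS : w _ (ND_sum hπ (c :: bs) hbs) = w _ hcπ + w _ (ND_sum hπ bs hb) := rfl
    refine ⟨_, hB, c :: bs, hbs, ?_, ?_⟩
    · rw [w_add hA hψ' hB, w_add (q' := θ') hθ hd hA, _root_.map_add, _root_.map_add, h1, hKθ, w_self, add_zero]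
    · rw [hwB, hwS]
      have e1 := w_self (w _ hcπ)
      have e2 := w_self (w θ' hd)
      calc w φ hφ = w φ hφ + (w _ hcπ + w _ hcπ) + (w θ' hd + w θ' hd) := by
            rw [e1, e2, add_zero, add_zero]
        _ = w φ hφ + (w _ hcπ + w _ hcπ) + (w θ' hd + (w ψ' hψ' + w _ (ND_sum hπ bs hb))) := by
            rw [← h2]
        _ = _ := by abel
  · unfold An at han
    push Not at han
    obtain ⟨x, hx0, hx⟩ := han
    obtain ⟨m, d, hm, hd, hl⟩ := eplus f hK 1 φ.dim φ.c hφ (K ∙ x) (by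
      intro y hy
      obtain ⟨t, rfl⟩ := Submodule.mem_span_singleton.1 hy
      rw [QuadraticMap.map_smul]
      have : Qc (φ.c.map f) x = 0 := hx0
      rw [this, smul_zero]) (by rw [finrank_span_singleton hx])
    let θ' : QF F := ⟨m, d⟩
    have hKθ : wmap f (w φ hφ) = wmap f (w θ' hd) := by
      rw [wmap_w, wmap_w, w_eq_iff]
      exact hl
    have hLθ : wmap g (wmap f (w θ' hd)) = 0 := by rw [← hKθ, h0]
    obtain ⟨ψ', hψ', bs, hb, h1, h2⟩ := ih m (by omega) θ' rfl hd hLθ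
    have hA := ND_orthSum (q' := θ') hφ hd
    have hB := ND_orthSum hA hψ'
    refine ⟨_, hB, bs, hb, ?_, ?_⟩
    · rw [w_add hA hψ' hB, w_add (q' := θ') hφ hd hA, _root_.map_add, _root_.map_add, h1, hKθ, w_self, add_zero]
    · rw [w_add hA hψ' hB, w_add (q' := θ') hφ hd hA, add_assoc, ← h2, add_assoc, w_self, add_zero]

/-- Witt equivalent nonsingular forms have the same class. -/
theorem w_eq_of_wittEquiv {q q' : QF F} (hq : ND (Qc q.c)) (hq' : ND (Qc q'.c))
    (h : QF.WittEquiv q q') : w q hq = w q' hq' := by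
  obtain ⟨k, k', l, l', h⟩ := h
  obtain ⟨hk, hkl⟩ := hyp_props (E := F) k
  obtain ⟨hk', hkl'⟩ := hyp_props (E := F) k'
  have hX := ND_orthSum hq hk
  have hY := ND_orthSum hq' hk'
  have hz : ∀ (l : ℕ) y, Qc (QF.zeros l : QF F).c y = 0 := by
    intro l y
    show Qc (Matrix.diagonal (fun _ => (0 : F))) y = 0
    rw [Qc_apply]; simp [Matrix.diagonal]
  have key : ∀ {q q' : QF F} {k k' l l' : ℕ}, 
      QF.Isometric (q.orthSum ((QF.hyp k).orthSum (QF.zeros l)))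
        (q'.orthSum ((QF.hyp k').orthSum (QF.zeros l'))) → 
      ∃ t : ((Fin q.dim → F) × (Fin (QF.hyp k : QF F).dim → F)) →ₗ[F]
          ((Fin q'.dim → F) × (Fin (QF.hyp k' : QF F).dim → F)),
        ∀ x, ((Qc q'.c).prod (Qc (QF.hyp k').c)) (t x) = ((Qc q.c).prod (Qc (QF.hyp k).c)) x := by
    intro q q' k k' l l' h
    rw [isometric_iff] at h
    have e1 : ((Qc q.c).prod ((Qc (QF.hyp k : QF F).c).prod (Qc (QF.zeros l : QF F).c))).Equivalent
        (Qc (q.orthSum ((QF.hyp k).orthSum (QF.zeros l))).c) := 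
      (QuadraticMap.Equivalent.prod (QuadraticMap.Equivalent.refl _) (orthSum_equiv _ _)).trans
        (orthSum_equiv _ _)
    have e2 : ((Qc q'.c).prod ((Qc (QF.hyp k' : QF F).c).prod (Qc (QF.zeros l' : QF F).c))).Equivalent
        (Qc (q'.orthSum ((QF.hyp k').orthSum (QF.zeros l'))).c) := 
      (QuadraticMap.Equivalent.prod (QuadraticMap.Equivalent.refl _) (orthSum_equiv _ _)).trans
        (orthSum_equiv _ _)
    obtain ⟨e⟩ := (e1.trans h).trans e2.symm
    let inc : ((Fin q.dim → F) × (Fin (QF.hyp k : QF F).dim → F)) →ₗ[F]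
        ((Fin q.dim → F) × ((Fin (QF.hyp k : QF F).dim → F) × (Fin (QF.zeros l : QF F).dim → F))) :=
      LinearMap.prodMap LinearMap.id (LinearMap.inl F _ _)
    let pr : ((Fin q'.dim → F) × ((Fin (QF.hyp k' : QF F).dim → F) × (Fin (QF.zeros l' : QF F).dim → F)))
        →ₗ[F] ((Fin q'.dim → F) × (Fin (QF.hyp k' : QF F).dim → F)) :=
      LinearMap.prodMap LinearMap.id (LinearMap.fst F _ _)
    refine ⟨pr ∘ₗ e.toLinearEquiv.toLinearMap ∘ₗ inc, ?_⟩
    intro x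
    have h1 := e.map_app (inc x)
    have h2 : ((Qc q.c).prod ((Qc (QF.hyp k : QF F).c).prod (Qc (QF.zeros l : QF F).c))) (inc x)
        = ((Qc q.c).prod (Qc (QF.hyp k).c)) x := by
      simp [inc, QuadraticMap.prod_apply]
    have h3 : ∀ z, ((Qc q'.c).prod ((Qc (QF.hyp k' : QF F).c).prod (Qc (QF.zeros l' : QF F).c))) z
        = ((Qc q'.c).prod (Qc (QF.hyp k').c)) (pr z) := by
      intro z
      simp [pr, QuadraticMap.prod_apply, hz]
    rw [h2, h3] at h1
    exact h1
  obtain ⟨t, ht⟩ := key h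
  have h' : QF.Isometric (q'.orthSum ((QF.hyp k').orthSum (QF.zeros l')))
      (q.orthSum ((QF.hyp k).orthSum (QF.zeros l))) := by
    rw [isometric_iff] at h ⊢
    exact h.symm
  obtain ⟨s, hs⟩ := key h'
  have hsinj := (hq'.prod hk').injective s hs
  have hd := LinearMap.finrank_le_finrank_of_injective hsinj
  have hlg := Lagr.graph t ht hd
  have hh : w _ hX = w _ hY := by
    rw [w_eq_iff]
    exact hlg.equiv (QuadraticMap.Equivalent.prod (orthSum_equiv _ _) (orthSum_equiv _ _))
  rwa [w_add hq hk, w_add hq' hk', (w_zero _ hk).2 hkl, (w_zero _ hk').2 hkl', add_zero,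
    add_zero] at hh

theorem wittEquiv_of_w_eq {q q' : QF F} (hq : ND (Qc q.c)) (hq' : ND (Qc q'.c))
    (h : w q hq = w q' hq') : QF.WittEquiv q q' := by
  rw [w_eq_iff] at h
  have h1 := h.equiv (orthSum_equiv q q')
  obtain ⟨k, hk⟩ := hyperbolic_aux _ _ (ND_orthSum hq hq') h1
  obtain ⟨k', hk'⟩ := hyperbolic_aux _ _ (ND_orthSum hq' hq')
    ((Lagr.self (Qc q'.c)).equiv (orthSum_equiv q' q'))
  have hz : ∀ p : QF F, (Qc p.c).Equivalent (Qc (p.orthSum (QF.zeros 0)).c) := by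
    intro p
    refine QuadraticMap.Equivalent.trans ?_ (orthSum_equiv p (QF.zeros 0))
    refine equiv_of_injective (LinearMap.inl F _ _) (fun x => ?_) LinearMap.inl_injective ?_
    · simp
    · rw [finrank_prod, finrank_fin_fun, finrank_fin_fun]
      rfl
  refine ⟨k', k, 0, 0, ?_⟩
  rw [isometric_iff]
  have s1 : (Qc (q.orthSum ((QF.hyp k').orthSum (QF.zeros 0))).c).Equivalent
      ((Qc q.c).prod ((Qc q'.c).prod (Qc q'.c))) :=
    (orthSum_equiv _ _).symm.trans (QuadraticMap.Equivalent.prod (QuadraticMap.Equivalent.refl _)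
      ((hz _).symm.trans (hk'.symm.trans (orthSum_equiv _ _).symm)))
  have s2 : (Qc (q'.orthSum ((QF.hyp k).orthSum (QF.zeros 0))).c).Equivalent
      ((Qc q'.c).prod ((Qc q.c).prod (Qc q'.c))) :=
    (orthSum_equiv _ _).symm.trans (QuadraticMap.Equivalent.prod (QuadraticMap.Equivalent.refl _)
      ((hz _).symm.trans (hk.symm.trans (orthSum_equiv _ _).symm)))
  have s3 : ((Qc q.c).prod ((Qc q'.c).prod (Qc q'.c))).Equivalent
      ((Qc q'.c).prod ((Qc q.c).prod (Qc q'.c))) := 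
    ((prodAssoc_equiv _ _ _).symm.trans (QuadraticMap.Equivalent.prod (prodComm_equiv _ _)
      (QuadraticMap.Equivalent.refl _))).trans (prodAssoc_equiv _ _ _)
  exact (s1.trans s3).trans s2.symm

end main
end WK

open QF in
/-- Let `F` have characteristic 2, let `π = ⟨⟨a₁,…,a_{n-1}; b]]` be an
`n`-fold quadratic Pfister form over `F` (`n = m + 1 ≥ 1`), let `K/F` be purely
inseparable of exponent 1 (`K² ⊆ F`), and let `L = K(π)` be the function field over `K`
of the quadric `π = 0`.  Then `W_q(L/F) = W_q(K/F) + W(F) ⊗ π`: a nonsingular form `φ`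
over `F` becomes hyperbolic over `L` iff `φ` is Witt equivalent to `ψ ⊥ (β ⊗ π)` where
`ψ` is nonsingular and hyperbolic over `K` and `β ⊗ π` is a sum `⊥ᵢ bᵢ·π`, `bᵢ ∈ F*`. -/
theorem wittKernel_functionField_quadratic_pfister
    (F K : Type*) [Field F] [Field K] [Algebra F K] [CharP F 2]
    (hK : ∀ x : K, ∃ y : F, algebraMap F K y = x ^ 2)
    (m : ℕ) (a : Fin m → F) (ha : ∀ i, a i ≠ 0) (b : F)
    (π : QF F) (hπ : π = pfTensor (List.ofFn a) (bin 1 b))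
    [IsDomain (CoordRing (π.map (algebraMap F K)))] :
    ∀ φ : QF F, φ.Nonsingular →
      (Hyperbolic (φ.map (toFunctionField (F := F) (π.map (algebraMap F K)))) ↔
        ∃ (ψ : QF F) (bs : List F), ψ.Nonsingular ∧
          Hyperbolic (ψ.map (algebraMap F K)) ∧ (∀ c ∈ bs, c ≠ 0) ∧
          WittEquiv φ (ψ.orthSum (sumList (bs.map fun c => smul c π)))) := by
  intro φ hφ
  rw [WK.nonsingular_iff] at hφ
  let f := algebraMap F K
  let g : K →+* FunctionField (π.map (algebraMap F K)) :=
    (algebraMap (CoordRing (π.map (algebraMap F K))) (FunctionField (π.map (algebraMap F K)))).comp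
      (algebraMap K (CoordRing (π.map (algebraMap F K))))
  haveI : CharP K 2 := charP_of_injective_ringHom f.injective 2
  haveI : CharP (FunctionField (π.map (algebraMap F K))) 2 :=
    charP_of_injective_ringHom g.injective 2
  have hl : ∀ x ∈ List.ofFn a, x ≠ 0 := by
    intro x hx
    obtain ⟨i, rfl⟩ := List.mem_ofFn.1 hx
    exact ha i
  have hP : WK.PfP (WK.Qc π.c) := by
    rw [hπ]; exact WK.PfP_pfTensor _ hl b
  have hPS : ∃ i0 i1, WK.PS π.c i0 i1 := by
    rw [hπ]; exact WK.PS_pfTensor _ b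
  obtain ⟨i0, i1, hPS⟩ := hPS
  have hPSK : WK.PS (π.map f).c i0 i1 := hPS.map f
  have hPL : WK.PfP (WK.Qc (π.map (g.comp f)).c) := by
    have h1 : π.map (g.comp f) = pfTensor ((List.ofFn a).map (g.comp f)) (bin 1 ((g.comp f) b)) := by
      refine (congrArg (QF.map (g.comp f)) hπ).trans ?_
      rw [WK.map_pfTensor, WK.map_bin, map_one]
    rw [h1]
    refine WK.PfP_pfTensor _ ?_ _
    intro x hx
    obtain ⟨y, hy, rfl⟩ := List.mem_map.1 hx
    exact (map_ne_zero _).2 (hl y hy)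
  have hπL : WK.Lagr (WK.Qc (π.map (g.comp f)).c) :=
    hPL.2.2 (WK.function_field_isotropic (π.map f) hPSK)
  have hdim : π.dim ≠ 0 := by
    intro h
    exact absurd i0.2 (by omega)
  have hmain := WK.main_ind f hK g π hP.1 hdim hπL
    (fun n hn c hc hL v => WK.star (π.map f) hPSK hn c hc hL v)
  have hcomp : ∀ (q : QF F) (hq : WK.ND (WK.Qc q.c)),
      WK.wmap g (WK.wmap f (WK.w q hq)) = 0 ↔ WK.Lagr (WK.Qc (q.map (g.comp f)).c) := by
    intro q hq
    rw [WK.wmap_w, WK.wmap_w, WK.w_zero]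
    exact Iff.rfl
  have hhyp : Hyperbolic (φ.map (toFunctionField (F := F) (π.map (algebraMap F K)))) ↔
      WK.wmap g (WK.wmap f (WK.w φ hφ)) = 0 := by
    rw [hcomp]
    exact WK.hyperbolic_iff (φ.map (g.comp f)) (WK.ND_qmap (g.comp f) hφ)
  have hhypK : ∀ (ψ : QF F) (hψ : WK.ND (WK.Qc ψ.c)), Hyperbolic (ψ.map (algebraMap F K)) ↔
      WK.wmap f (WK.w ψ hψ) = 0 := by
    intro ψ hψ
    rw [WK.wmap_w, WK.w_zero]
    exact WK.hyperbolic_iff (ψ.map f) (WK.ND_qmap f hψ)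
  rw [hhyp]
  constructor
  · intro h
    obtain ⟨ψ, hψ, bs, hb, h1, h2⟩ := hmain _ φ rfl hφ h
    refine ⟨ψ, bs, (WK.nonsingular_iff ψ).2 hψ, (hhypK ψ hψ).2 h1, hb, ?_⟩
    exact WK.wittEquiv_of_w_eq hφ (WK.ND_orthSum hψ (WK.ND_sum hP.1 bs hb)) h2
  · rintro ⟨ψ, bs, hψ, hψK, hb, hw⟩
    rw [WK.nonsingular_iff] at hψ
    have hS := WK.ND_sum hP.1 bs hb
    have h2 := WK.w_eq_of_wittEquiv hφ (WK.ND_orthSum hψ hS) hw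
    rw [h2, WK.w_add hψ hS, map_add, map_add, (hhypK ψ hψ).1 hψK, map_zero, zero_add, hcomp]
    exact WK.Lagr_sum (g.comp f) hπL bs
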